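/- arXiv:1802.05051 — 8 statements merged into one kernel-verified Lean document; each statement's English description precedes it below -/
import Mathlib

section
/- Let H₁ and H₂ be two k-uniform hypergraphs on n vertices. If |E(H₁)| + |E(H₂)| < 2·√(C(n,k)), then H₁ and H₂ pack. -/
open Finset

/-- A family of edges is `k`-uniform if every edge has exactly `k` vertices. -/
def Uniform (k : ℕ) {V : Type*} (E : Finset (Finset V)) : Prop :=
  ∀ e ∈ E, e.card = k

/-- Two hypergraphs (given by their edge sets) pack if there is a bijection of the
vertex sets mapping every edge of the first to a non-edge of the second. -/
def Packs {V₁ V₂ : Type*} [DecidableEq V₂]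
    (E₁ : Finset (Finset V₁)) (E₂ : Finset (Finset V₂)) : Prop :=
  ∃ f : V₁ ≃ V₂, ∀ e ∈ E₁, e.image f ∉ E₂

/-- `maxDeg l E` is `Δ_l(H)`: the maximum, over `l`-element vertex subsets `U`,
of the number of edges containing `U`. -/
def maxDeg {V : Type*} [Fintype V] [DecidableEq V] (l : ℕ) (E : Finset (Finset V)) : ℕ :=
  (Finset.univ.powersetCard l).sup fun U => (E.filter fun e => U ⊆ e).card

/-- A `t`-`(n, k, lam)` design: a family of `k`-element subsets such that every
`t`-element vertex subset is contained in exactly `lam` members. -/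
def IsDesign (t k lam : ℕ) {V : Type*} [Fintype V] [DecidableEq V]
    (T : Finset (Finset V)) : Prop :=
  (∀ e ∈ T, e.card = k) ∧
  ∀ S : Finset V, S.card = t → (T.filter fun e => S ⊆ e).card = lam

/-- `mMin n k` is the minimum possible value of `|E(H₁)| + |E(H₂)|` over all pairs of
`k`-uniform hypergraphs `H₁`, `H₂` on `n` vertices that do not pack. -/
noncomputable def mMin (n k : ℕ) : ℕ :=
  sInf {m | ∃ E₁ E₂ : Finset (Finset (Fin n)), Uniform k E₁ ∧ Uniform k E₂ ∧
    ¬ Packs E₁ E₂ ∧ E₁.card + E₂.card = m}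

theorem exists_perm_image {n : ℕ} (s t : Finset (Fin n)) (h : s.card = t.card) :
    ∃ g : Fin n ≃ Fin n, s.image g = t := by
  let e : {x // x ∈ s} ≃ {x // x ∈ t} := Finset.equivOfCardEq h
  refine ⟨e.extendSubtype, ?_⟩
  apply Finset.eq_of_subset_of_card_le
  · intro y hy
    obtain ⟨x, hx, rfl⟩ := Finset.mem_image.1 hy
    exact e.extendSubtype_mem x hx
  · rw [Finset.card_image_of_injective _ (Equiv.injective _), h]

theorem count_perm {n k : ℕ} (s t : Finset (Fin n)) (hs : s.card = k) (ht : t.card = k) :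
    n.choose k * (univ.filter fun f : Fin n ≃ Fin n => s.image f = t).card
      = Fintype.card (Fin n ≃ Fin n) := by
  have key : ∀ u ∈ (univ : Finset (Fin n)).powersetCard k,
      (univ.filter fun f : Fin n ≃ Fin n => s.image f = u).card
        = (univ.filter fun f : Fin n ≃ Fin n => s.image f = t).card := by
    intro u hu
    have hu' := (Finset.mem_powersetCard.1 hu).2
    obtain ⟨g, hg⟩ := exists_perm_image u t (by omega)
    refine Finset.card_bij' (fun f _ => f.trans g) (fun f _ => f.trans g.symm) ?_ ?_ ?_ ?_
    · intro f hf
      simp only [Finset.mem_filter, Finset.mem_univ, true_and] at hf ⊢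
      rw [← hg, ← hf, Finset.image_image]; rfl
    · intro f hf
      simp only [Finset.mem_filter, Finset.mem_univ, true_and] at hf ⊢
      have : u = t.image g.symm := by
        rw [← hg, Finset.image_image]; simp
      rw [this, ← hf, Finset.image_image]; rfl
    · intro f _; ext; simp
    · intro f _; ext; simp
  have h2 := Finset.card_eq_sum_card_fiberwise (s := (univ : Finset (Fin n ≃ Fin n)))
    (t := (univ : Finset (Fin n)).powersetCard k) (f := fun f : Fin n ≃ Fin n => s.image f) (by
      intro f _
      simp [Finset.card_image_of_injective _ f.injective, hs])
  rw [Finset.sum_congr rfl key] at h2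
  simpa using h2.symm

theorem stmt_3 (k n : ℕ)
    (E₁ E₂ : Finset (Finset (Fin n))) (h₁ : Uniform k E₁) (h₂ : Uniform k E₂)
    (h : ((E₁.card + E₂.card : ℕ) : ℝ) < 2 * Real.sqrt (n.choose k)) :
    Packs E₁ E₂ := by
  by_contra hp
  unfold Packs at hp
  push Not at hp
  have hcover : (univ : Finset (Fin n ≃ Fin n)) ⊆ (E₁ ×ˢ E₂).biUnion
      fun p => univ.filter fun f : Fin n ≃ Fin n => p.1.image f = p.2 := by
    intro f _
    obtain ⟨e, he, he'⟩ := hp f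
    simp only [Finset.mem_biUnion, Finset.mem_product, Finset.mem_filter, Finset.mem_univ, true_and]
    exact ⟨(e, e.image f), ⟨he, he'⟩, rfl⟩
  have hc := (Finset.card_le_card hcover).trans Finset.card_biUnion_le
  have hm := Nat.mul_le_mul_left (n.choose k) hc
  rw [Finset.mul_sum, Finset.sum_congr rfl (fun p hp => count_perm p.1 p.2
    (h₁ _ (Finset.mem_product.1 hp).1) (h₂ _ (Finset.mem_product.1 hp).2))] at hm
  rw [Finset.sum_const, smul_eq_mul, Finset.card_product, Finset.card_univ] at hm
  have hC : n.choose k ≤ E₁.card * E₂.card := Nat.le_of_mul_le_mul_right hm Fintype.card_pos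
  have hC' : (n.choose k : ℝ) ≤ E₁.card * E₂.card := by exact_mod_cast hC
  have hs := Real.sq_sqrt (Nat.cast_nonneg (α := ℝ) (n.choose k))
  have h0 := Real.sqrt_nonneg (n.choose k : ℝ)
  push_cast at h
  have ha : (0 : ℝ) ≤ E₁.card := Nat.cast_nonneg _
  have hb : (0 : ℝ) ≤ E₂.card := Nat.cast_nonneg _
  nlinarith [sq_nonneg ((E₁.card : ℝ) - E₂.card)]
end

section
/- For all n ≥ k ≥ 2, m(n,k) ≥ 2·√(C(n,k)); that is, any two k-uniform hypergraphs H₁ and H₂ on n vertices that do not pack satisfy |E(H₁)| + |E(H₂)| ≥ 2·√(C(n,k)). In particular, m(n,k) = Ω(n^{k/2}) for fixed k. -/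
open Finset

theorem count_aux {n k : ℕ} (e e' : Finset (Fin n)) (he : e.card = k) (he' : e'.card = k) :
    (univ.filter fun f : Fin n ≃ Fin n => e.image f = e').card * n.choose k = n.factorial := by
  have key : ∀ d ∈ (univ : Finset (Fin n)).powersetCard k,
      (univ.filter fun f : Fin n ≃ Fin n => e.image f = d).card =
      (univ.filter fun f : Fin n ≃ Fin n => e.image f = e').card := by
    intro d hd
    have hd : d.card = k := (mem_powersetCard.1 hd).2
    have h1 : Fintype.card {x // x ∈ d} = Fintype.card {x // x ∈ e'} := by simp [hd, he']
    let g := Fintype.equivOfCardEq h1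
    let s : Equiv.Perm (Fin n) := g.extendSubtype
    have hs : d.image s = e' := by
      apply eq_of_subset_of_card_le
      · intro y hy
        obtain ⟨x, hx, rfl⟩ := mem_image.1 hy
        exact g.extendSubtype_mem x hx
      · rw [card_image_of_injective _ s.injective, hd, he']
    apply card_bij (fun f _ => f.trans s)
    · intro f hf
      simp only [mem_filter, mem_univ, true_and] at hf ⊢
      rw [Equiv.coe_trans, ← image_image, hf, hs]
    · intro a _ b _ h
      ext x
      have := congrArg (fun t => s.symm (t x)) h
      simpa using congrArg Fin.val this
    · intro f hf
      simp only [mem_filter, mem_univ, true_and] at hf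
      refine ⟨f.trans s.symm, ?_, ?_⟩
      · simp only [mem_filter, mem_univ, true_and]
        rw [Equiv.coe_trans, ← image_image, hf, ← hs, image_image]
        simp
      · ext x; simp
  have h2 := card_eq_sum_card_fiberwise (s := (univ : Finset (Fin n ≃ Fin n)))
    (t := (univ : Finset (Fin n)).powersetCard k) (f := fun f : Fin n ≃ Fin n => e.image f) (by
      intro f _
      simp [mem_powersetCard, card_image_of_injective _ f.injective, he])
  rw [sum_congr rfl key, sum_const, card_powersetCard, card_univ, card_univ, Fintype.card_fin,
    Fintype.card_perm, Fintype.card_fin, smul_eq_mul] at h2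
  rw [h2, mul_comm]

theorem choose_le_mul {n k : ℕ} (hkn : k ≤ n) (E₁ E₂ : Finset (Finset (Fin n)))
    (h₁ : Uniform k E₁) (h₂ : Uniform k E₂) (hp : ¬ Packs E₁ E₂) :
    n.choose k ≤ E₁.card * E₂.card := by
  have hsub : (univ : Finset (Fin n ≃ Fin n)) ⊆ (E₁ ×ˢ E₂).biUnion
      fun p => univ.filter fun f : Fin n ≃ Fin n => p.1.image f = p.2 := by
    intro f _
    by_contra hf
    apply hp
    refine ⟨f, fun e he h => hf ?_⟩
    simp only [mem_biUnion, mem_product, mem_filter, mem_univ, true_and]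
    exact ⟨(e, e.image f), ⟨he, h⟩, rfl⟩
  have hc := (card_le_card hsub).trans card_biUnion_le
  rw [card_univ, Fintype.card_perm, Fintype.card_fin] at hc
  have h3 := Nat.mul_le_mul_right (n.choose k) hc
  rw [sum_mul, sum_congr rfl (g := fun _ => n.factorial)
    (fun p hp => count_aux p.1 p.2 (h₁ _ (mem_product.1 hp).1) (h₂ _ (mem_product.1 hp).2)),
    sum_const, card_product, smul_eq_mul, mul_comm] at h3
  exact Nat.le_of_mul_le_mul_right h3 n.factorial_pos

theorem main_bound {n k : ℕ} (hkn : k ≤ n) (E₁ E₂ : Finset (Finset (Fin n)))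
    (h₁ : Uniform k E₁) (h₂ : Uniform k E₂) (hp : ¬ Packs E₁ E₂) :
    2 * Real.sqrt (n.choose k) ≤ ((E₁.card + E₂.card : ℕ) : ℝ) := by
  have h : (n.choose k : ℝ) ≤ E₁.card * E₂.card := by
    exact_mod_cast choose_le_mul hkn E₁ E₂ h₁ h₂ hp
  have : Real.sqrt (n.choose k) ≤ ((E₁.card + E₂.card : ℕ) : ℝ) / 2 := by
    rw [Real.sqrt_le_left (by positivity)]
    push_cast
    nlinarith [sq_nonneg ((E₁.card : ℝ) - E₂.card)]
  linarith

/-- for `n ≥ k ≥ 2`, any two non-packing `k`-uniform hypergraphs on `n`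
vertices satisfy `|E(H₁)| + |E(H₂)| ≥ 2·√(C(n,k))`; in particular, for fixed `k`,
`m(n,k) = Ω(n^(k/2))`. -/
theorem stmt_4 (k : ℕ) (hk : 2 ≤ k) :
    (∀ n : ℕ, k ≤ n → ∀ E₁ E₂ : Finset (Finset (Fin n)),
      Uniform k E₁ → Uniform k E₂ → ¬ Packs E₁ E₂ →
      2 * Real.sqrt (n.choose k) ≤ ((E₁.card + E₂.card : ℕ) : ℝ)) ∧
    ∃ c : ℝ, 0 < c ∧ ∀ n : ℕ, k ≤ n → ∀ E₁ E₂ : Finset (Finset (Fin n)),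
      Uniform k E₁ → Uniform k E₂ → ¬ Packs E₁ E₂ →
      c * (n : ℝ) ^ ((k : ℝ) / 2) ≤ ((E₁.card + E₂.card : ℕ) : ℝ) := by
  refine ⟨fun n hn E₁ E₂ h₁ h₂ hp => main_bound hn E₁ E₂ h₁ h₂ hp, ?_⟩
  have hk0 : (0 : ℝ) < k := by exact_mod_cast (by omega : 0 < k)
  have hf : (0 : ℝ) < k.factorial := by exact_mod_cast k.factorial_pos
  refine ⟨Real.sqrt (1 / ((k : ℝ) ^ k * k.factorial)), by positivity, ?_⟩
  intro n hn E₁ E₂ h₁ h₂ hp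
  refine le_trans ?_ (main_bound hn E₁ E₂ h₁ h₂ hp)
  have e1 : (n : ℝ) ^ ((k : ℝ) / 2) = Real.sqrt ((n : ℝ) ^ k) := by
    rw [Real.sqrt_eq_rpow, ← Real.rpow_natCast, ← Real.rpow_mul (by positivity)]
    congr 1; ring
  rw [e1, ← Real.sqrt_mul (by positivity)]
  have h5 : n ≤ k * (n + 1 - k) := by
    obtain ⟨d, rfl⟩ := Nat.exists_eq_add_of_le hn
    have : k + d + 1 - k = d + 1 := by omega
    rw [this]
    nlinarith
  have h6 : n ^ k ≤ k ^ k * (k.factorial * n.choose k) := by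
    calc n ^ k ≤ (k * (n + 1 - k)) ^ k := Nat.pow_le_pow_left h5 k
      _ = k ^ k * (n + 1 - k) ^ k := mul_pow _ _ _
      _ ≤ _ := Nat.mul_le_mul_left _ (by
        have := Nat.pow_sub_le_descFactorial n k
        rwa [Nat.descFactorial_eq_factorial_mul_choose] at this)
  have h7 : (n : ℝ) ^ k ≤ (k : ℝ) ^ k * (k.factorial * n.choose k) := by exact_mod_cast h6
  have h8 : 1 / ((k : ℝ) ^ k * k.factorial) * (n : ℝ) ^ k ≤ n.choose k := by
    rw [one_div, inv_mul_le_iff₀ (by positivity)]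
    linarith
  have := Real.sqrt_le_sqrt h8
  have := Real.sqrt_nonneg (n.choose k : ℝ)
  linarith
end

section
/- Let H₁ and H₂ be two k-uniform hypergraphs on n vertices. If |E(H₁)|·|E(H₂)| < C(n,k), then H₁ and H₂ pack. -/
open Finset

theorem exists_perm_image_s5 {n : ℕ} (b c : Finset (Fin n)) (h : b.card = c.card) :
    ∃ σ : Equiv.Perm (Fin n), b.image σ = c := by
  let e : {x // x ∈ b} ≃ {x // x ∈ c} := Finset.equivOfCardEq h
  refine ⟨e.extendSubtype, ?_⟩
  apply Finset.eq_of_subset_of_card_le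
  · intro x hx
    obtain ⟨y, hy, rfl⟩ := Finset.mem_image.1 hx
    exact e.extendSubtype_mem y hy
  · rw [Finset.card_image_of_injective _ (Equiv.injective _), h]

theorem fiber_le {n : ℕ} (a b c : Finset (Fin n)) (h : b.card = c.card) :
    (univ.filter fun f : Equiv.Perm (Fin n) => a.image f = b).card ≤
    (univ.filter fun f : Equiv.Perm (Fin n) => a.image f = c).card := by
  obtain ⟨σ, hσ⟩ := exists_perm_image_s5 b c h
  apply Finset.card_le_card_of_injOn (fun f => σ * f)
  · intro f hf
    have hf' : a.image f = b := by simpa using hf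
    have : a.image (σ * f) = c := by
      rw [← hσ, ← hf', Finset.image_image]; rfl
    simpa using this
  · intro f _ g _ hfg
    exact mul_left_cancel hfg

theorem fiber_card {n k : ℕ} (a b : Finset (Fin n)) (ha : a.card = k) (hb : b.card = k) :
    n.choose k * (univ.filter fun f : Equiv.Perm (Fin n) => a.image f = b).card =
    Fintype.card (Equiv.Perm (Fin n)) := by
  have key := Finset.card_eq_sum_card_fiberwise (s := (univ : Finset (Equiv.Perm (Fin n))))
    (t := (univ : Finset (Fin n)).powersetCard k) (f := fun f : Equiv.Perm (Fin n) => a.image f) (by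
      intro f _
      simp [Finset.mem_powersetCard, Finset.card_image_of_injective _ f.injective, ha])
  rw [← Finset.card_univ, key, Finset.sum_congr rfl (g := fun _ =>
    (univ.filter fun f : Equiv.Perm (Fin n) => a.image f = b).card)]
  · simp
  · intro c hc
    have hc' := (Finset.mem_powersetCard.1 hc).2
    exact le_antisymm (fiber_le _ _ _ (by omega)) (fiber_le _ _ _ (by omega))

/-- if `|E(H₁)|·|E(H₂)| < C(n,k)` then the two `k`-uniform hypergraphs
on `n` vertices pack. -/
theorem stmt_5 (k n : ℕ)
    (E₁ E₂ : Finset (Finset (Fin n))) (h₁ : Uniform k E₁) (h₂ : Uniform k E₂)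
    (h : E₁.card * E₂.card < n.choose k) :
    Packs E₁ E₂ := by
  by_contra hp
  have hp' : ∀ f : Equiv.Perm (Fin n), ∃ e ∈ E₁, e.image f ∈ E₂ := by
    intro f
    by_contra hf
    push Not at hf
    exact hp ⟨f, hf⟩
  have hsub : (univ : Finset (Equiv.Perm (Fin n))) ⊆ (E₁ ×ˢ E₂).biUnion
      fun p => univ.filter fun f : Equiv.Perm (Fin n) => p.1.image f = p.2 := by
    intro f _
    obtain ⟨e, he, he'⟩ := hp' f
    exact Finset.mem_biUnion.2 ⟨(e, e.image f), by simp [he, he'], by simp⟩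
  have h3 := (Finset.card_le_card hsub).trans Finset.card_biUnion_le
  have h4 : n.choose k * Fintype.card (Equiv.Perm (Fin n)) ≤
      (E₁.card * E₂.card) * Fintype.card (Equiv.Perm (Fin n)) := by
    calc _ ≤ n.choose k * _ := Nat.mul_le_mul_left _ h3
      _ = ∑ p ∈ E₁ ×ˢ E₂, Fintype.card (Equiv.Perm (Fin n)) := by
        rw [Finset.mul_sum]
        apply Finset.sum_congr rfl
        intro p hp
        obtain ⟨ha, hb⟩ := Finset.mem_product.1 hp
        exact fiber_card _ _ (h₁ _ ha) (h₂ _ hb)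
      _ = _ := by rw [Finset.sum_const, Finset.card_product, smul_eq_mul]
  exact absurd (Nat.le_of_mul_le_mul_right h4 Fintype.card_pos) (by omega)
end

section
/- Let G₁ and G₂ be two graphs (2-uniform hypergraphs) on n vertices. If 2·Δ(G₁)·Δ(G₂) < n, then G₁ and G₂ pack. -/
open Finset

def Nb {n : ℕ} (E : Finset (Finset (Fin n))) (a : Fin n) : Finset (Fin n) :=
  Finset.univ.filter fun b => ({a, b} : Finset (Fin n)) ∈ E

lemma mem_Nb {n : ℕ} (E : Finset (Finset (Fin n))) (a b : Fin n) :
    b ∈ Nb E a ↔ ({a, b} : Finset (Fin n)) ∈ E := by simp [Nb]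

lemma ne_of_edge {n : ℕ} {E : Finset (Finset (Fin n))} (h : Uniform 2 E) {a b : Fin n}
    (hab : ({a, b} : Finset (Fin n)) ∈ E) : a ≠ b := by
  rintro rfl
  have := h _ hab
  simp at this

lemma card_Nb_le {n : ℕ} (E : Finset (Finset (Fin n))) (h : Uniform 2 E) (a : Fin n) :
    (Nb E a).card ≤ maxDeg 1 E := by
  have h1 : (E.filter fun e => ({a} : Finset (Fin n)) ⊆ e).card ≤ maxDeg 1 E := by
    unfold maxDeg
    exact Finset.le_sup (f := fun U => (E.filter fun e => U ⊆ e).card)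
      (b := ({a} : Finset (Fin n))) (Finset.mem_powersetCard.2 ⟨Finset.subset_univ _, Finset.card_singleton a⟩)
  refine le_trans ?_ h1
  refine Finset.card_le_card_of_injOn (fun b => ({a, b} : Finset (Fin n))) ?_ ?_
  · intro b hb
    have hb' := (mem_Nb E a b).1 hb
    simp [hb']
  · intro b hb c hc hbc
    have hb' := ne_of_edge h ((mem_Nb E a b).1 hb)
    have : b ∈ ({a, c} : Finset (Fin n)) := by
      have hbc' : ({a, b} : Finset (Fin n)) = {a, c} := hbc
      rw [← hbc']; simp
    simp only [Finset.mem_insert, Finset.mem_singleton] at this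
    rcases this with h | h
    · exact absurd h.symm hb'
    · exact h

def conf {n : ℕ} (E₁ E₂ : Finset (Finset (Fin n))) (f : Fin n ≃ Fin n) :
    Finset (Finset (Fin n)) := E₁.filter fun e => e.image f ∈ E₂

lemma improve {n : ℕ}
    (E₁ E₂ : Finset (Finset (Fin n))) (h₁ : Uniform 2 E₁) (h₂ : Uniform 2 E₂)
    (h : 2 * maxDeg 1 E₁ * maxDeg 1 E₂ < n) (f : Fin n ≃ Fin n)
    (hf : (conf E₁ E₂ f).Nonempty) : ∃ g : Fin n ≃ Fin n, conf E₁ E₂ g ⊂ conf E₁ E₂ f := by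
  obtain ⟨e, he⟩ := hf
  have he' := he
  simp only [conf, Finset.mem_filter] at he'
  obtain ⟨he1, he2⟩ := he'
  obtain ⟨u, v, huv, rfl⟩ := Finset.card_eq_two.1 (h₁ e he1)
  rw [Finset.image_insert, Finset.image_singleton] at he2
  set A : Finset (Fin n) := (Nb E₁ u).biUnion fun x => (Nb E₂ (f x)).image f.symm with hA
  set B : Finset (Fin n) := (Nb E₂ (f u)).biUnion fun y => Nb E₁ (f.symm y) with hB
  have cA : A.card ≤ maxDeg 1 E₁ * maxDeg 1 E₂ :=
    (Finset.card_biUnion_le_card_mul _ _ (maxDeg 1 E₂)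
      (fun x _ => Finset.card_image_le.trans (card_Nb_le E₂ h₂ _))).trans
      (Nat.mul_le_mul_right _ (card_Nb_le E₁ h₁ _))
  have cB : B.card ≤ maxDeg 1 E₁ * maxDeg 1 E₂ := by
    rw [mul_comm]
    exact (Finset.card_biUnion_le_card_mul _ _ (maxDeg 1 E₁)
      (fun x _ => card_Nb_le E₁ h₁ _)).trans
      (Nat.mul_le_mul_right _ (card_Nb_le E₂ h₂ _))
  have mA : ∀ x w, ({u, x} : Finset (Fin n)) ∈ E₁ → ({f w, f x} : Finset (Fin n)) ∈ E₂ →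
      w ∈ A := by
    intro x w hx hw
    rw [hA, Finset.mem_biUnion]
    refine ⟨x, (mem_Nb _ _ _).2 hx, Finset.mem_image.2 ⟨f w, (mem_Nb _ _ _).2 ?_, by simp⟩⟩
    rwa [Finset.pair_comm]
  have mB : ∀ x w, ({w, x} : Finset (Fin n)) ∈ E₁ → ({f u, f x} : Finset (Fin n)) ∈ E₂ →
      w ∈ B := by
    intro x w hx hw
    rw [hB, Finset.mem_biUnion]
    refine ⟨f x, (mem_Nb _ _ _).2 hw, (mem_Nb _ _ _).2 ?_⟩
    rw [Finset.pair_comm]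
    simpa using hx
  have uA : u ∈ A := mA v u he1 he2
  have uB : u ∈ B := mB v u he1 he2
  have hc := Finset.card_union_add_card_inter A B
  have hpos : 0 < (A ∩ B).card := Finset.card_pos.2 ⟨u, Finset.mem_inter.2 ⟨uA, uB⟩⟩
  have hins := Finset.card_insert_le v (A ∪ B)
  have hlt : (insert v (A ∪ B)).card < (Finset.univ : Finset (Fin n)).card := by
    rw [Finset.card_univ, Fintype.card_fin]
    have : 2 * maxDeg 1 E₁ * maxDeg 1 E₂ = 2 * (maxDeg 1 E₁ * maxDeg 1 E₂) := by ring
    omega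
  obtain ⟨w, -, hw⟩ := Finset.exists_mem_notMem_of_card_lt_card hlt
  simp only [Finset.mem_insert, Finset.mem_union, not_or] at hw
  obtain ⟨hwv, hwA, hwB⟩ := hw
  have hwu : w ≠ u := by rintro rfl; exact hwA uA
  have gu : ((Equiv.swap u w).trans f) u = f w := by simp
  have gw : ((Equiv.swap u w).trans f) w = f u := by simp
  have go : ∀ x, x ≠ u → x ≠ w → ((Equiv.swap u w).trans f) x = f x := by
    intro x h1 h2; simp [Equiv.swap_apply_of_ne_of_ne h1 h2]
  refine ⟨(Equiv.swap u w).trans f, ?_⟩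
  generalize (Equiv.swap u w).trans f = g at gu gw go
  -- pair version
  have key : ∀ a b, ({a, b} : Finset (Fin n)) ∈ E₁ → ({g a, g b} : Finset (Fin n)) ∈ E₂ →
      ({f a, f b} : Finset (Fin n)) ∈ E₂ := by
    have key1 : ∀ b, ({u, b} : Finset (Fin n)) ∈ E₁ → ({g u, g b} : Finset (Fin n)) ∈ E₂ →
      ({f u, f b} : Finset (Fin n)) ∈ E₂ := by
      intro b h1 h2
      have hb := ne_of_edge h₁ h1
      by_cases hbw : b = w
      · subst hbw; rw [gu, gw, Finset.pair_comm] at h2; exact h2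
      · rw [gu, go b hb.symm hbw] at h2
        exact absurd (mA b w h1 h2) hwA
    have key2 : ∀ b, ({w, b} : Finset (Fin n)) ∈ E₁ → ({g w, g b} : Finset (Fin n)) ∈ E₂ →
      ({f w, f b} : Finset (Fin n)) ∈ E₂ := by
      intro b h1 h2
      have hb := ne_of_edge h₁ h1
      by_cases hbu : b = u
      · subst hbu; rw [gu, gw, Finset.pair_comm] at h2; exact h2
      · rw [gw, go b hbu hb.symm] at h2
        exact absurd (mB b w h1 h2) hwB
    intro a b h1 h2
    by_cases hau : a = u
    · subst hau; exact key1 b h1 h2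
    by_cases haw : a = w
    · subst haw; exact key2 b h1 h2
    by_cases hbu : b = u
    · subst hbu; rw [Finset.pair_comm] at h1 h2 ⊢; exact key1 a h1 h2
    by_cases hbw : b = w
    · subst hbw; rw [Finset.pair_comm] at h1 h2 ⊢; exact key2 a h1 h2
    rwa [go a hau haw, go b hbu hbw] at h2
  rw [Finset.ssubset_iff_of_subset]
  · refine ⟨_, he, ?_⟩
    simp only [conf, Finset.mem_filter, not_and, Finset.image_insert, Finset.image_singleton]
    intro _ h2
    rw [gu, go v huv.symm (Ne.symm hwv)] at h2
    exact hwA (mA v w he1 h2)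
  · intro e he
    simp only [conf, Finset.mem_filter] at he ⊢
    obtain ⟨h1, h2⟩ := he
    obtain ⟨a, b, hab, rfl⟩ := Finset.card_eq_two.1 (h₁ e h1)
    rw [Finset.image_insert, Finset.image_singleton] at h2 ⊢
    exact ⟨h1, key a b h1 h2⟩

/-- if `2·Δ(G₁)·Δ(G₂) < n` then the two graphs (2-uniform hypergraphs)
on `n` vertices pack. -/
theorem stmt_8 (n : ℕ)
    (E₁ E₂ : Finset (Finset (Fin n))) (h₁ : Uniform 2 E₁) (h₂ : Uniform 2 E₂)
    (h : 2 * maxDeg 1 E₁ * maxDeg 1 E₂ < n) :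
    Packs E₁ E₂ := by
  obtain ⟨f, -, hf⟩ := Finset.exists_min_image (Finset.univ : Finset (Fin n ≃ Fin n))
    (fun f => (conf E₁ E₂ f).card) ⟨Equiv.refl _, Finset.mem_univ _⟩
  refine ⟨f, fun e he hfe => ?_⟩
  obtain ⟨g, hg⟩ := improve E₁ E₂ h₁ h₂ h f ⟨e, by simp [conf, he, hfe]⟩
  exact absurd (hf g (Finset.mem_univ _)) (not_le.2 (Finset.card_lt_card hg))
end

section
/- Let G₁ and G₂ be two graphs (2-uniform hypergraphs) on n vertices. If |E(G₁)| + |E(G₂)| ≤ ⌈3n/2⌉ − 2, then G₁ and G₂ pack. -/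
open Finset

set_option linter.unusedSectionVars false

namespace PackAux

open Classical in
/-- degree inside `A` -/
noncomputable def d {α : Type} (G : SimpleGraph α) (A : Finset α) (v : α) : ℕ :=
  (A.filter (fun w => G.Adj v w)).card

/-- degree sum inside `A` -/
noncomputable def D {α : Type} (G : SimpleGraph α) (A : Finset α) : ℕ := ∑ v ∈ A, d G A v

def Pk {α : Type} (G H : SimpleGraph α) (A B : Finset α) : Prop :=
  ∃ f : α → α, Set.BijOn f A B ∧ ∀ a ∈ A, ∀ b ∈ A, G.Adj a b → ¬ H.Adj (f a) (f b)

variable {α : Type} [DecidableEq α] [Nonempty α]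

lemma exBij (A B : Finset α) (h : A.card = B.card) : ∃ f : α → α, Set.BijOn f A B := by
  have e := Finset.equivOfCardEq h
  refine ⟨fun a => if h : a ∈ A then (e ⟨a, h⟩ : α) else a, ?_, ?_, ?_⟩
  · intro a ha
    have ha' : a ∈ A := ha
    simp [ha']
  · intro a ha b hb hab
    have ha' : a ∈ A := ha
    have hb' : b ∈ A := hb
    simp only [ha', hb', dif_pos] at hab
    have := e.injective (Subtype.ext hab)
    exact congrArg Subtype.val this
  · intro b hb
    have hb' : b ∈ B := hb
    refine ⟨(e.symm ⟨b, hb'⟩ : α), ?_, ?_⟩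
    · exact (e.symm ⟨b, hb'⟩).2
    · simp

lemma Pk.symm {G H : SimpleGraph α} {A B : Finset α} (h : Pk G H A B) : Pk H G B A := by
  obtain ⟨f, hf, hp⟩ := h
  have hi := hf.invOn_invFunOn
  have hb : Set.BijOn (Function.invFunOn f A) B A := hf.symm hi.symm
  refine ⟨Function.invFunOn f A, hb, ?_⟩
  intro a ha b hb' hab hG
  have := hp _ (hb.mapsTo ha) _ (hb.mapsTo hb') hG
  rw [hi.2 ha, hi.2 hb'] at this
  exact this hab

lemma ext_closed {G H : SimpleGraph α} {A B S T : Finset α} (hS : S ⊆ A) (hT : T ⊆ B)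
    (hc : S.card = T.card) (hcl : ∀ s ∈ S, ∀ a ∈ A, G.Adj s a → a ∈ S)
    (hind : ∀ s ∈ T, ∀ t ∈ T, ¬ H.Adj s t) (h : Pk G H (A \ S) (B \ T)) : Pk G H A B := by
  obtain ⟨f, hf, hp⟩ := h
  obtain ⟨g, hg⟩ := exBij S T hc
  have hgm : ∀ a ∈ S, g a ∈ T := fun a ha => hg.mapsTo ha
  have hfm : ∀ a ∈ A, a ∉ S → f a ∈ B ∧ f a ∉ T := fun a ha hs => by
    have : f a ∈ ((B \ T : Finset α) : Set α) := hf.mapsTo (by simp [ha, hs])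
    simpa using this
  refine ⟨fun a => if a ∈ S then g a else f a, ⟨?_, ?_, ?_⟩, ?_⟩
  · intro a ha
    have ha' : a ∈ A := ha
    by_cases hs : a ∈ S
    · simpa [hs] using hT (hgm a hs)
    · simpa [hs] using (hfm a ha' hs).1
  · intro a ha b hb hab
    have ha' : a ∈ A := ha
    have hb' : b ∈ A := hb
    by_cases hs : a ∈ S <;> by_cases ht : b ∈ S <;> simp only [hs, ht, if_true, if_false] at hab
    · exact hg.injOn hs ht hab
    · exact absurd (hab ▸ hgm a hs) (hfm b hb' ht).2
    · exact absurd (hab ▸ hgm b ht) (hfm a ha' hs).2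
    · exact hf.injOn (by simp [ha', hs]) (by simp [hb', ht]) hab
  · intro b hb
    have hb' : b ∈ B := hb
    by_cases ht : b ∈ T
    · obtain ⟨a, ha, rfl⟩ := hg.surjOn ht
      have ha' : a ∈ S := ha
      exact ⟨a, hS ha', by simp [ha']⟩
    · have : b ∈ ((B \ T : Finset α) : Set α) := by simp [hb', ht]
      obtain ⟨a, ha, rfl⟩ := hf.surjOn this
      have ha' : a ∈ A ∧ a ∉ S := by simpa using ha
      exact ⟨a, ha'.1, by simp [ha'.2]⟩
  · intro a ha b hb hab
    by_cases hs : a ∈ S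
    · have ht : b ∈ S := hcl a hs b hb hab
      simpa [hs, ht] using hind _ (hgm a hs) _ (hgm b ht)
    · have ht : b ∉ S := fun ht => hs (hcl b ht a ha hab.symm)
      simpa [hs, ht] using hp a (by simp [ha, hs]) b (by simp [hb, ht]) hab

lemma d_mono (G : SimpleGraph α) {A B : Finset α} (h : A ⊆ B) (v : α) : d G A v ≤ d G B v := by
  classical
  exact card_le_card (filter_subset_filter _ h)

lemma D_closed (G : SimpleGraph α) {A S : Finset α} (hS : S ⊆ A) :
    D G (A \ S) + ∑ s ∈ S, d G A s ≤ D G A := by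
  unfold D
  rw [← Finset.sum_sdiff hS]
  gcongr with v hv
  exact d_mono G sdiff_subset v

lemma dcomm (G : SimpleGraph α) (S T : Finset α) : ∑ s ∈ S, d G T s = ∑ t ∈ T, d G S t := by
  classical
  unfold d
  simp only [card_filter]
  rw [sum_comm]
  simp only [G.adj_comm]

lemma d_split (G : SimpleGraph α) {A S : Finset α} (hS : S ⊆ A) (v : α) :
    d G A v = d G (A \ S) v + d G S v := by
  classical
  unfold d
  simp only [card_filter]
  rw [Finset.sum_sdiff hS]

lemma D_indep (G : SimpleGraph α) {A S : Finset α} (hS : S ⊆ A)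
    (hind : ∀ s ∈ S, ∀ t ∈ S, ¬ G.Adj s t) :
    D G (A \ S) + 2 * ∑ s ∈ S, d G A s ≤ D G A := by
  have h0 : ∀ s ∈ S, d G S s = 0 := by
    classical
    intro s hs
    unfold d
    rw [card_eq_zero, filter_eq_empty_iff]
    exact fun t ht => hind s hs t ht
  have h1 : ∑ s ∈ S, d G A s = ∑ s ∈ S, d G (A \ S) s := by
    refine sum_congr rfl fun s hs => ?_
    rw [d_split G hS, h0 s hs, add_zero]
  have h2 : D G A = ∑ v ∈ A \ S, (d G (A \ S) v + d G S v) + ∑ s ∈ S, d G A s := by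
    unfold D
    rw [← Finset.sum_sdiff hS]
    congr 1
    exact sum_congr rfl fun v _ => d_split G hS v
  rw [h2, sum_add_distrib, ← dcomm G S (A \ S), ← h1]
  unfold D
  omega

lemma pk_empty {G H : SimpleGraph α} {A B : Finset α} (hc : A.card = B.card)
    (h : ∀ a ∈ A, ∀ b ∈ A, ¬ G.Adj a b) : Pk G H A B := by
  obtain ⟨f, hf⟩ := exBij A B hc
  exact ⟨f, hf, fun a ha b hb hab => absurd hab (h a ha b hb)⟩

lemma d_pos {G : SimpleGraph α} {A : Finset α} {a b : α} (hb : b ∈ A) (h : G.Adj a b) :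
    1 ≤ d G A a := by
  classical
  exact card_pos.mpr ⟨b, by simp [hb, h]⟩

lemma d_one {G : SimpleGraph α} {A : Finset α} {a b c : α} (hd : d G A a ≤ 1) (hb : b ∈ A)
    (hc : c ∈ A) (h : G.Adj a b) (h' : G.Adj a c) : b = c := by
  classical
  exact card_le_one.mp hd b (by simp [hb, h]) c (by simp [hc, h'])

lemma d_ex {G : SimpleGraph α} {A : Finset α} {a : α} (hd : 1 ≤ d G A a) :
    ∃ b ∈ A, G.Adj a b := by
  classical
  obtain ⟨b, hb⟩ := card_pos.mp hd
  exact ⟨b, by simpa using hb⟩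

/-- statement for smaller sets -/
def IH (α : Type) (k : ℕ) : Prop :=
  ∀ (G H : SimpleGraph α) (A B : Finset α), A.card < k → A.card = B.card →
    D G A + D H B + 3 ≤ 3 * A.card → Pk G H A B

lemma step {k : ℕ} (ih : IH α k) {G H : SimpleGraph α} {A B S T : Finset α}
    (hk : A.card = k) (hAB : A.card = B.card) (hD : D G A + D H B + 3 ≤ 3 * A.card)
    (hS : S ⊆ A) (hT : T ⊆ B) (hne : 0 < S.card)
    (hc : S.card = T.card) (hcl : ∀ s ∈ S, ∀ a ∈ A, G.Adj s a → a ∈ S)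
    (hind : ∀ s ∈ T, ∀ t ∈ T, ¬ H.Adj s t)
    (hcount : 3 * S.card ≤ ∑ s ∈ S, d G A s + 2 * ∑ t ∈ T, d H B t) : Pk G H A B := by
  have h1 := D_closed G hS
  have h2 := D_indep H hT hind
  have h3 := card_sdiff_add_card_eq_card hS
  have h4 := card_sdiff_add_card_eq_card hT
  exact ext_closed hS hT hc hcl hind (ih _ _ _ _ (by omega) (by omega) (by omega))

lemma ex_nonadj {G : SimpleGraph α} {A : Finset α} (h : D G A + 5 ≤ 3 * A.card) :
    ∃ p ∈ A, ∃ q ∈ A, p ≠ q ∧ ¬ G.Adj p q := by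
  classical
  by_contra! hh
  have : ∀ p ∈ A, A.card - 1 ≤ d G A p := by
    intro p hp
    rw [← card_erase_of_mem hp]
    apply card_le_card
    intro q hq
    have := mem_erase.mp hq
    exact mem_filter.mpr ⟨this.2, hh p hp q this.2 this.1.symm⟩
  have h2 : A.card * (A.card - 1) ≤ D G A := by
    have := Finset.card_nsmul_le_sum A _ _ this
    unfold D
    simpa using this
  obtain ⟨m, hm⟩ : ∃ m, A.card = m + 1 := ⟨A.card - 1, by omega⟩
  rw [hm] at h2 h
  simp at h2
  nlinarith [sq_nonneg ((m:ℤ) - 1)]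

lemma ex_adj {G H : SimpleGraph α} {A B : Finset α} (hc : A.card = B.card)
    (h : ¬ Pk G H A B) : ∃ v ∈ B, ∃ w ∈ B, H.Adj v w := by
  by_contra! hh
  exact h (pk_empty hc.symm hh).symm

lemma D_ge {G : SimpleGraph α} {A : Finset α} {v w : α} (hv : v ∈ A) (hw : w ∈ A)
    (h : G.Adj v w) : 2 ≤ D G A := by
  have h1 : ∑ x ∈ ({v, w} : Finset α), d G A x ≤ D G A := by
    unfold D
    apply sum_le_sum_of_subset
    intro x hx
    simp at hx
    rcases hx with rfl | rfl <;> assumption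
  rw [sum_pair h.ne] at h1
  have := d_pos hw h
  have := d_pos hv h.symm
  omega

lemma pk_K2 {k : ℕ} (ih : IH α k) {G H : SimpleGraph α} {A B : Finset α}
    (hk : A.card = k) (hAB : A.card = B.card) (hD : D G A + D H B + 3 ≤ 3 * A.card)
    {x y : α} (hx : x ∈ A) (hy : y ∈ A) (hxy : G.Adj x y) (dx : d G A x ≤ 1) (dy : d G A y ≤ 1) :
    Pk G H A B := by
  by_contra hn
  have hG := D_ge hx hy hxy
  have hxp := d_pos hy hxy
  have hyp := d_pos hx hxy.symm
  have key : ∀ v ∈ B, ∀ w ∈ B, v ≠ w → ¬ H.Adj v w → d H B v + d H B w ≤ 1 := by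
    intro v hv w hw hvw hnad
    by_contra hlt
    apply hn
    refine step ih hk hAB hD (S := {x, y}) (T := {v, w}) ?_ ?_ ?_ ?_ ?_ ?_ ?_
    · intro z hz
      simp at hz
      rcases hz with rfl | rfl <;> assumption
    · intro z hz
      simp at hz
      rcases hz with rfl | rfl <;> assumption
    · simp
    · rw [card_pair hxy.ne, card_pair hvw]
    · intro s hs a ha hsa
      simp at hs ⊢
      rcases hs with rfl | rfl
      · right; exact d_one dx ha hy hsa hxy
      · left; exact d_one dy ha hx hsa hxy.symm
    · intro s hs t ht
      simp at hs ht
      rcases hs with rfl | rfl <;> rcases ht with rfl | rfl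
      · simp
      · exact hnad
      · exact fun h => hnad h.symm
      · simp
    · rw [card_pair hxy.ne, sum_pair hxy.ne, sum_pair hvw]
      omega
  obtain ⟨p, hp, q, hq, hpq, hnpq⟩ := ex_nonadj (G := H) (A := B) (by omega)
  have hle : ∀ v ∈ B, d H B v ≤ 1 := by
    intro v hv
    by_contra hlt
    have : ∀ t ∈ B, 1 ≤ d H B t := by
      intro t ht
      by_cases htv : t = v
      · subst htv; omega
      · by_cases hadj : H.Adj t v
        · exact d_pos hv hadj
        · have := key t ht v hv htv hadj
          omega
    have h1 := this p hp
    have h2 := this q hq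
    have := key p hp q hq hpq hnpq
    omega
  obtain ⟨v, hv, w, hw, hvw⟩ := ex_adj hAB hn
  have hH := D_ge hv hw hvw
  obtain ⟨p, hp, q, hq, hpq, hnpq⟩ := ex_nonadj (G := G) (A := A) (by omega)
  have hS : ({v, w} : Finset α) ⊆ B := by
    intro z hz
    simp at hz
    rcases hz with rfl | rfl <;> assumption
  have hT : ({p, q} : Finset α) ⊆ A := by
    intro z hz
    simp at hz
    rcases hz with rfl | rfl <;> assumption
  have h3 := card_sdiff_add_card_eq_card hS
  have h4 := card_sdiff_add_card_eq_card hT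
  have hcc : ({v, w} : Finset α).card = ({p, q} : Finset α).card := by
    rw [card_pair hvw.ne, card_pair hpq]
  apply hn
  apply Pk.symm
  refine ext_closed hS hT hcc ?_ ?_ (pk_empty (by omega) ?_)
  · intro s hs a ha hsa
    simp at hs ⊢
    rcases hs with rfl | rfl
    · right; exact d_one (hle _ hv) ha hw hsa hvw
    · left; exact d_one (hle _ hw) ha hv hsa hvw.symm
  · intro s hs t ht
    simp at hs ht
    rcases hs with rfl | rfl <;> rcases ht with rfl | rfl
    · simp
    · exact hnpq
    · exact fun h => hnpq h.symm
    · simp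
  · intro a ha b hb hab
    simp at ha hb
    have h5 := d_pos hb.1 hab
    have h6 := d_pos hw hvw
    have h7 := key a ha.1 v hv ha.2.1 (fun h => by
      have := d_one (hle _ ha.1) hb.1 hv hab h
      exact hb.2.1 this)
    omega

lemma pk_K1 {k : ℕ} (ih : IH α k) {G H : SimpleGraph α} {A B : Finset α}
    (hk : A.card = k) (hAB : A.card = B.card) (hD : D G A + D H B + 3 ≤ 3 * A.card)
    {x : α} (hx : x ∈ A) (dx : d G A x = 0) : Pk G H A B := by
  by_contra hn
  have hle : ∀ v ∈ B, d H B v ≤ 1 := by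
    intro v hv
    by_contra hlt
    apply hn
    refine step ih hk hAB hD (S := {x}) (T := {v}) ?_ ?_ ?_ ?_ ?_ ?_ ?_
    · simpa using hx
    · simpa using hv
    · simp
    · simp
    · intro s hs a ha hsa
      simp at hs
      subst hs
      have := d_pos ha hsa
      omega
    · simp
    · simp
      omega
  obtain ⟨v, hv, w, hw, hvw⟩ := ex_adj hAB hn
  exact hn (pk_K2 (G := H) (H := G) ih (hAB ▸ hk) hAB.symm (by omega) hv hw hvw
    (hle v hv) (hle w hw)).symm

open Classical in
/-- leaves -/
noncomputable def L (G : SimpleGraph α) (A : Finset α) : Finset α := A.filter (fun v => d G A v = 1)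

lemma sum_leaf (G : SimpleGraph α) (A : Finset α) :
    ∑ v ∈ A, d G (L G A) v = ∑ v ∈ A, (if d G A v = 1 then 1 else 0) := by
  rw [dcomm]
  unfold L
  rw [sum_filter]
  refine sum_congr rfl fun v _ => ?_
  split_ifs with h <;> simp [h]

lemma L_sub (G : SimpleGraph α) (A : Finset α) : L G A ⊆ A := by
  classical
  exact filter_subset _ _

lemma mem_L {G : SimpleGraph α} {A : Finset α} {v : α} : v ∈ L G A ↔ v ∈ A ∧ d G A v = 1 := by
  classical
  simp [L]

lemma leaf_leaf {G : SimpleGraph α} {A : Finset α}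
    (h2 : ∀ x ∈ A, ∀ y ∈ A, G.Adj x y → d G A x ≤ 1 → d G A y ≤ 1 → False)
    {v : α} (hv : v ∈ A) (h : d G A v = 1) : d G (L G A) v = 0 := by
  by_contra hh
  obtain ⟨b, hb, hvb⟩ := d_ex (Nat.one_le_iff_ne_zero.mpr hh)
  rw [mem_L] at hb
  exact h2 v hv b hb.1 hvb h.le hb.2.le

lemma main {k : ℕ} (ih : IH α k) {G H : SimpleGraph α} {A B : Finset α}
    (hk : A.card = k) (hAB : A.card = B.card) (hD : D G A + D H B + 3 ≤ 3 * A.card)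
    (hle : D G A ≤ D H B) : Pk G H A B := by
  by_contra hn
  have hn' : ¬ Pk H G B A := fun h => hn h.symm
  have hk' : B.card = k := hAB ▸ hk
  have hD' : D H B + D G A + 3 ≤ 3 * B.card := by omega
  have g1 : ∀ x ∈ A, 1 ≤ d G A x := fun x hx => Nat.one_le_iff_ne_zero.mpr fun h =>
    hn (pk_K1 ih hk hAB hD hx h)
  have h1 : ∀ x ∈ B, 1 ≤ d H B x := fun x hx => Nat.one_le_iff_ne_zero.mpr fun h =>
    hn' (pk_K1 ih hk' hAB.symm hD' hx h)
  have g2 : ∀ x ∈ A, ∀ y ∈ A, G.Adj x y → d G A x ≤ 1 → d G A y ≤ 1 → False :=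
    fun x hx y hy hxy dx dy => hn (pk_K2 ih hk hAB hD hx hy hxy dx dy)
  have h2 : ∀ x ∈ B, ∀ y ∈ B, H.Adj x y → d H B x ≤ 1 → d H B y ≤ 1 → False :=
    fun x hx y hy hxy dx dy => hn' (pk_K2 ih hk' hAB.symm hD' hx hy hxy dx dy)
  have c1 : 4 * A.card ≤ 3 * D G A := by
    have : ∑ v ∈ A, (4 + d G (L G A) v) ≤ ∑ v ∈ A, (3 * d G A v + if d G A v = 1 then 1 else 0) := by
      refine sum_le_sum fun v hv => ?_
      have a1 := g1 v hv
      have a2 := d_mono G (L_sub G A) v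
      split_ifs with h
      · have := leaf_leaf g2 hv h
        omega
      · omega
    rw [sum_add_distrib, sum_add_distrib, sum_leaf, ← mul_sum] at this
    simp only [sum_const, smul_eq_mul] at this
    unfold D
    omega
  have c2 : ∃ y ∈ A, d G A y = 2 ∧ 2 ≤ d G (L G A) y := by
    by_contra! hno
    have : ∑ v ∈ A, (3 + d G (L G A) v) ≤ ∑ v ∈ A, (2 * d G A v + if d G A v = 1 then 1 else 0) := by
      refine sum_le_sum fun v hv => ?_
      have a1 := g1 v hv
      have a2 := d_mono G (L_sub G A) v
      have a3 := hno v hv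
      split_ifs with h
      · have := leaf_leaf g2 hv h
        omega
      · by_cases h' : d G A v = 2
        · have := a3 h'
          omega
        · omega
    rw [sum_add_distrib, sum_add_distrib, sum_leaf, ← mul_sum] at this
    simp only [sum_const, smul_eq_mul] at this
    unfold D at *
    omega
  have c3 : 3 ≤ (L H B).card := by
    have : ∑ v ∈ B, 2 ≤ ∑ v ∈ B, (d H B v + if d H B v = 1 then 1 else 0) := by
      refine sum_le_sum fun v hv => ?_
      have a1 := h1 v hv
      split_ifs with h <;> omega
    rw [sum_add_distrib, ← card_filter] at this
    have e : (L H B).card = (B.filter (fun v => d H B v = 1)).card := by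
      unfold L; congr
    rw [← e] at this
    simp only [sum_const, smul_eq_mul] at this
    change _ ≤ D H B + _ at this
    omega
  obtain ⟨T, hT, hTc⟩ := exists_subset_card_eq c3
  obtain ⟨y, hy, dy, ly⟩ := c2
  obtain ⟨x, hx, z, hz, hxz⟩ := one_lt_card.mp (show 1 < _ from ly)
  simp only [mem_filter, mem_L] at hx hz
  have hset : ∀ a ∈ A, G.Adj y a → a = x ∨ a = z := by
    classical
    intro a ha hya
    by_contra! hne
    have : ({a, x, z} : Finset α).card ≤ d G A y := by
      apply card_le_card
      intro t ht
      simp only [mem_insert, mem_singleton] at ht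
      simp only [mem_filter]
      rcases ht with rfl | rfl | rfl
      · exact ⟨ha, hya⟩
      · exact ⟨hx.1.1, hx.2⟩
      · exact ⟨hz.1.1, hz.2⟩
    rw [card_eq_three.mpr ⟨a, x, z, hne.1, hne.2, hxz, rfl⟩] at this
    omega
  have hyx := hx.2.ne
  have hyz := hz.2.ne
  have hSc : ({y, x, z} : Finset α).card = 3 := card_eq_three.mpr ⟨y, x, z, hyx, hyz, hxz, rfl⟩
  apply hn
  refine step ih hk hAB hD (S := {y, x, z}) (T := T) ?_ (hT.trans (L_sub H B)) ?_ ?_ ?_ ?_ ?_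
  · intro t ht
    simp only [mem_insert, mem_singleton] at ht
    rcases ht with rfl | rfl | rfl
    · exact hy
    · exact hx.1.1
    · exact hz.1.1
  · omega
  · omega
  · intro s hs a ha hsa
    simp only [mem_insert, mem_singleton] at hs ⊢
    rcases hs with rfl | rfl | rfl
    · exact Or.inr (hset a ha hsa)
    · exact Or.inl (d_one hx.1.2.le ha hy hsa hx.2.symm)
    · exact Or.inl (d_one hz.1.2.le ha hy hsa hz.2.symm)
  · intro s hs t ht hst
    have a := mem_L.mp (hT hs)
    have b := mem_L.mp (hT ht)
    exact h2 s a.1 t b.1 hst a.2.le b.2.le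
  · have e1 : ∑ t ∈ T, d H B t = 3 := by
      rw [sum_congr rfl (fun t ht => (mem_L.mp (hT ht)).2)]
      simp [hTc]
    have e2 : ∑ t ∈ ({y, x, z} : Finset α), d G A t = 4 := by
      rw [sum_insert (by simp [hyx, hyz]), sum_pair hxz]
      omega
    omega

lemma all (k : ℕ) : IH α k := by
  induction k with
  | zero => intro G H A B h; omega
  | succ k ih =>
    intro G H A B hlt hAB hD
    rcases Nat.lt_succ_iff_lt_or_eq.mp hlt with h | h
    · exact ih G H A B h hAB hD
    · rcases le_total (D G A) (D H B) with hle | hle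
      · exact main ih h hAB hD hle
      · exact (main ih (hAB ▸ h) hAB.symm (by omega) hle).symm

/-- graph of an edge family -/
def gr (E : Finset (Finset α)) : SimpleGraph α where
  Adj a b := a ≠ b ∧ ({a, b} : Finset α) ∈ E
  symm := ⟨fun a b h => ⟨h.1.symm, by rw [pair_comm]; exact h.2⟩⟩
  loopless := ⟨fun a h => h.1 rfl⟩

lemma D_gr (E : Finset (Finset α)) (h : Uniform 2 E) (A : Finset α) :
    D (gr E) A ≤ 2 * E.card := by
  classical
  have e : D (gr E) A = ((A ×ˢ A).filter (fun p => (gr E).Adj p.1 p.2)).card := by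
    unfold D d
    simp only [card_filter]
    rw [sum_product]
  rw [e]
  refine card_le_mul_card_image_of_maps_to (f := fun p => ({p.1, p.2} : Finset α)) ?_ 2 ?_
  · intro p hp
    exact (mem_filter.mp hp).2.2
  · intro s hs
    obtain ⟨a, b, hab, rfl⟩ := card_eq_two.mp (h s hs)
    refine (card_le_card (t := {(a, b), (b, a)}) ?_).trans card_le_two
    rintro ⟨p, q⟩ hp
    simp only [mem_filter] at hp
    obtain ⟨⟨_, hne, _⟩, heq⟩ := hp
    have hp' : p ∈ ({a, b} : Finset α) := heq ▸ by simp
    have hq' : q ∈ ({a, b} : Finset α) := heq ▸ by simp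
    simp only [mem_insert, mem_singleton] at hp' hq'
    simp only [mem_insert, mem_singleton, Prod.mk.injEq]
    rcases hp' with rfl | rfl <;> rcases hq' with rfl | rfl <;> simp_all

end PackAux

/-- if `|E(G₁)| + |E(G₂)| ≤ ⌈3n/2⌉ − 2` then the two graphs (2-uniform
hypergraphs) on `n` vertices pack. -/
theorem stmt_9 (n : ℕ)
    (E₁ E₂ : Finset (Finset (Fin n))) (h₁ : Uniform 2 E₁) (h₂ : Uniform 2 E₂)
    (h : (E₁.card + E₂.card : ℤ) ≤ ⌈(3 * (n : ℚ)) / 2⌉ - 2) :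
    Packs E₁ E₂ := by
  have hc : (2 * (E₁.card + E₂.card) : ℤ) + 3 ≤ 3 * n := by
    have h3 := Int.ceil_lt_add_one ((3 * (n : ℚ)) / 2)
    have h4 : ((E₁.card + E₂.card : ℤ) : ℚ) ≤ ((⌈(3 * (n : ℚ)) / 2⌉ - 2 : ℤ) : ℚ) := by
      exact_mod_cast h
    push_cast at h4
    have h5 : (2 * (E₁.card + E₂.card) : ℚ) + 2 < 3 * n := by linarith
    have h6 : (2 * (E₁.card + E₂.card) : ℤ) + 2 < 3 * n := by exact_mod_cast h5
    omega
  have hn : 0 < n := by omega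
  haveI : Nonempty (Fin n) := ⟨⟨0, hn⟩⟩
  have d1 := PackAux.D_gr E₁ h₁ univ
  have d2 := PackAux.D_gr E₂ h₂ univ
  obtain ⟨f, hf, hp⟩ := PackAux.all (n + 1) (PackAux.gr E₁) (PackAux.gr E₂) univ univ
    (by simp) rfl (by simp only [card_univ, Fintype.card_fin]; omega)
  have hinj : Function.Injective f := by
    intro a b hab
    exact hf.injOn (by simp) (by simp) hab
  refine ⟨Equiv.ofBijective f (Finite.injective_iff_bijective.mp hinj), ?_⟩
  intro e he hE
  obtain ⟨a, b, hab, rfl⟩ := card_eq_two.mp (h₁ e he)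
  refine hp a (mem_univ _) b (mem_univ _) ⟨hab, he⟩ ⟨fun h => hab (hinj h), ?_⟩
  simpa [image_insert, image_singleton] using hE
end

section
/- Let k = 2α be even and n ≥ k. Let H₁ be the k-uniform hypergraph on n vertices consisting of a fixed α-element vertex set K such that the edges of H₁ are exactly the sets K ∪ S where S ranges over all α-element subsets of V(H₁) \ K. Let H₂ be any k-uniform hypergraph on n vertices whose edge set is an α-(n,k,1)-design. Then H₁ and H₂ do not pack. -/
open Finset

/-- for even `k = 2α` and `n ≥ k`, the hypergraph `H₁` whose edges are
exactly the sets `K ∪ S` with `S` an `α`-subset of the complement of a fixed `α`-set `K`,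
and any hypergraph `H₂` whose edge set is an `α-(n,k,1)` design, do not pack. -/
theorem stmt_10 (α k n : ℕ) (hk : k = 2 * α) (hn : k ≤ n)
    (K : Finset (Fin n)) (hK : K.card = α)
    (E₁ : Finset (Finset (Fin n)))
    (hE₁ : ∀ e : Finset (Fin n),
      e ∈ E₁ ↔ ∃ S : Finset (Fin n), S ⊆ Kᶜ ∧ S.card = α ∧ e = K ∪ S)
    (E₂ : Finset (Finset (Fin n))) (hE₂ : IsDesign α k 1 E₂) :
    ¬ Packs E₁ E₂ := by
  rintro ⟨f, hf⟩
  have h1 := hE₂.2 (K.image f) (by rw [Finset.card_image_of_injective _ f.injective, hK])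
  obtain ⟨e, he⟩ := Finset.card_eq_one.mp h1
  have hm : e ∈ E₂.filter fun e => K.image f ⊆ e := by rw [he]; simp
  rw [Finset.mem_filter] at hm
  obtain ⟨heE, hsub⟩ := hm
  have hcard := hE₂.1 e heE
  have hKs : K ⊆ e.image f.symm := by
    intro x hx
    exact Finset.mem_image.mpr ⟨f x, hsub (Finset.mem_image_of_mem f hx), by simp⟩
  have hc : (e.image f.symm).card = k := by
    rw [Finset.card_image_of_injective _ f.symm.injective, hcard]
  refine hf (e.image f.symm) ((hE₁ _).mpr ⟨e.image f.symm \ K, ?_, ?_, ?_⟩) ?_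
  · intro x hx
    rw [Finset.mem_compl]
    exact (Finset.mem_sdiff.mp hx).2
  · rw [Finset.card_sdiff_of_subset hKs, hc, hK]
    omega
  · exact (Finset.union_sdiff_of_subset hKs).symm
  · have : (e.image f.symm).image f = e := by
      rw [Finset.image_image]
      simp
    rw [this]
    exact heE
end

section
/- Let k ≥ 3, let t ≥ 1 and n be such that t divides n and (k−2)t + 1 ≤ n. Let H₁ be the k-uniform hypergraph on n vertices consisting of a set W of (k−2)t + 1 vertices whose edges are all k-element subsets of W together with all sets of the form S ∪ {v} where S is a (k−1)-element subset of W and v ∈ V(H₁) \ W. Let H₂ be a k-uniform hypergraph on n vertices which is a disjoint union of t copies of a hypergraph H whose edge set is a (k−1)-(n/t, k, 1)-design. Then H₁ and H₂ do not pack. -/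
open Finset

/-- for `k ≥ 3`, `t ≥ 1`, `t ∣ n`, `(k−2)t + 1 ≤ n`, the hypergraph `H₁`
(all `k`-subsets of a `((k−2)t+1)`-set `W`, plus all sets `S ∪ {v}` with `S` a
`(k−1)`-subset of `W` and `v ∉ W`) and the hypergraph `H₂` which is a disjoint union of
`t` copies of a hypergraph `H` whose edge set is a `(k−1)-(n/t,k,1)` design, do not pack. -/
theorem stmt_11 (k t n : ℕ) (hk : 3 ≤ k) (ht : 1 ≤ t) (htn : t ∣ n)
    (hWn : (k - 2) * t + 1 ≤ n)
    (W : Finset (Fin n)) (hW : W.card = (k - 2) * t + 1)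
    (E₁ : Finset (Finset (Fin n)))
    (hE₁ : ∀ e : Finset (Fin n), e ∈ E₁ ↔
      (e ⊆ W ∧ e.card = k) ∨
      (∃ S : Finset (Fin n), S ⊆ W ∧ S.card = k - 1 ∧ ∃ v : Fin n, v ∉ W ∧ e = insert v S))
    (H : Finset (Finset (Fin (n / t)))) (hH : IsDesign (k - 1) k 1 H)
    (E₂ : Finset (Finset (Fin t × Fin (n / t))))
    (hE₂ : ∀ e : Finset (Fin t × Fin (n / t)),
      e ∈ E₂ ↔ ∃ i : Fin t, ∃ e₀ ∈ H, e = e₀.image (fun v => (i, v))) :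
    ¬ Packs E₁ E₂ := by
  rintro ⟨f, hf⟩
  obtain ⟨i, -, hi⟩ := Finset.exists_lt_card_fiber_of_mul_lt_card_of_maps_to
    (s := W) (t := (Finset.univ : Finset (Fin t))) (f := fun w => (f w).1) (n := k - 2)
    (fun _ _ => Finset.mem_univ _) (by
      rw [hW, Finset.card_univ, Fintype.card_fin, Nat.mul_comm]
      omega)
  obtain ⟨S, hSsub, hS⟩ := Finset.exists_subset_card_eq (Nat.le_trans (by omega : k - 1 ≤ k - 2 + 1) hi)
  have hSW : S ⊆ W := hSsub.trans (Finset.filter_subset _ _)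
  have hSi : ∀ w ∈ S, (f w).1 = i := fun w hw => (Finset.mem_filter.1 (hSsub hw)).2
  have hS0 : (S.image (fun w => (f w).2)).card = k - 1 := by
    rw [Finset.card_image_of_injOn, hS]
    intro a ha b hb hab
    apply f.injective
    exact Prod.ext ((hSi a ha).trans (hSi b hb).symm) hab
  have h1 := hH.2 _ hS0
  obtain ⟨e₀, he₀⟩ := Finset.card_pos.1 (by rw [h1]; exact Nat.one_pos)
  obtain ⟨heH, hse⟩ := Finset.mem_filter.1 he₀
  have hek := hH.1 e₀ heH
  let P : Finset (Fin n) := (e₀.image (fun v => (i, v))).image f.symm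
  have hPimg : P.image f = e₀.image (fun v => (i, v)) := by
    simp [P, Finset.image_image, Function.comp_def]
  have hPk : P.card = k := by
    rw [Finset.card_image_of_injective _ f.symm.injective,
      Finset.card_image_of_injective _ (fun a b h => (Prod.mk.inj h).2), hek]
  have hSP : S ⊆ P := by
    intro w hw
    refine Finset.mem_image.2 ⟨f w, Finset.mem_image.2 ⟨(f w).2,
      hse (Finset.mem_image_of_mem _ hw), ?_⟩, by simp⟩
    exact Prod.ext (hSi w hw).symm rfl
  refine hf P ?_ ((hE₂ _).2 ⟨i, e₀, heH, hPimg⟩)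
  have hd : (P \ S).card = 1 := by
    rw [Finset.card_sdiff_of_subset hSP]; omega
  obtain ⟨v, hv⟩ := Finset.card_eq_one.1 hd
  have hP : P = insert v S := by
    rw [← Finset.sdiff_union_of_subset hSP, hv]; rfl
  rw [hE₁]
  by_cases hvW : v ∈ W
  · left
    refine ⟨?_, hPk⟩
    rw [hP]
    exact Finset.insert_subset hvW hSW
  · right
    exact ⟨S, hSW, hS, v, hvW, hP⟩
end

section
/- For every n ≥ 2, m(n,2) = ⌈3n/2⌉ − 1; that is, any two graphs on n vertices with |E(G₁)| + |E(G₂)| ≤ ⌈3n/2⌉ − 2 pack, and there exist two graphs G₁, G₂ on n vertices with |E(G₁)| + |E(G₂)| = ⌈3n/2⌉ − 1 that do not pack. -/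
open Finset

namespace SS
open Classical

noncomputable def dg {V : Type*} (G : SimpleGraph V) (S : Finset V) (x : V) : ℕ :=
  (S.filter fun y => G.Adj x y).card

noncomputable def DS {V : Type*} (G : SimpleGraph V) (S : Finset V) : ℕ := ∑ x ∈ S, dg G S x

def Pk {V : Type*} (G H : SimpleGraph V) (S T : Finset V) (f : V → V) : Prop :=
  (∀ x ∈ S, f x ∈ T) ∧ (∀ x ∈ S, ∀ y ∈ S, f x = f y → x = y) ∧
  ∀ x ∈ S, ∀ y ∈ S, G.Adj x y → ¬ H.Adj (f x) (f y)

theorem Pk.ext {V : Type*} {G H : SimpleGraph V} {S T : Finset V} {f : V → V} {u v : V}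
    (hv : v ∈ T) (h : Pk G H (S.erase u) (T.erase v) f)
    (hc : ∀ y ∈ S, y ≠ u → G.Adj u y → ¬ H.Adj v (f y)) :
    Pk G H S T (Function.update f u v) := by
  obtain ⟨h1, h2, h3⟩ := h
  simp only [Finset.mem_erase] at h1 h2 h3
  refine ⟨?_, ?_, ?_⟩
  · intro x hx
    by_cases hxu : x = u
    · subst hxu; simpa using hv
    · rw [Function.update_of_ne hxu]; exact (h1 x ⟨hxu, hx⟩).2
  · intro x hx y hy hxy
    by_cases hxu : x = u <;> by_cases hyu : y = u
    · rw [hxu, hyu]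
    · subst hxu
      rw [Function.update_self, Function.update_of_ne hyu] at hxy
      exact absurd hxy.symm (h1 y ⟨hyu, hy⟩).1
    · subst hyu
      rw [Function.update_self, Function.update_of_ne hxu] at hxy
      exact absurd hxy (h1 x ⟨hxu, hx⟩).1
    · rw [Function.update_of_ne hxu, Function.update_of_ne hyu] at hxy
      exact h2 x ⟨hxu, hx⟩ y ⟨hyu, hy⟩ hxy
  · intro x hx y hy hxy
    by_cases hxu : x = u <;> by_cases hyu : y = u
    · subst hxu; subst hyu; exact absurd hxy (G.loopless.irrefl _)
    · subst hxu
      rw [Function.update_self, Function.update_of_ne hyu]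
      exact hc y hy hyu hxy
    · subst hyu
      rw [Function.update_self, Function.update_of_ne hxu]
      intro h'
      exact hc x hx hxu hxy.symm h'.symm
    · rw [Function.update_of_ne hxu, Function.update_of_ne hyu]
      exact h3 x ⟨hxu, hx⟩ y ⟨hyu, hy⟩ hxy

theorem Pk.symm {V : Type*} {G H : SimpleGraph V} {S T : Finset V}
    (hc : S.card = T.card) (h : ∃ f, Pk G H S T f) : ∃ f, Pk H G T S f := by
  obtain ⟨f, h1, h2, h3⟩ := h
  have hs : ∀ t ∈ T, ∃ s ∈ S, f s = t := by
    intro t ht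
    have : S.image f = T := by
      apply Finset.eq_of_subset_of_card_le
      · intro z hz
        obtain ⟨s, hs, rfl⟩ := Finset.mem_image.1 hz
        exact h1 s hs
      · rw [Finset.card_image_of_injOn (fun x hx y hy => h2 x hx y hy), hc]
    rw [← this] at ht
    simpa using ht
  choose! g hg using hs
  refine ⟨g, fun t ht => (hg t ht).1, ?_, ?_⟩
  · intro x hx y hy hxy
    rw [← (hg x hx).2, ← (hg y hy).2, hxy]
  · intro x hx y hy hxy hG
    have := h3 _ (hg x hx).1 _ (hg y hy).1 hG
    rw [(hg x hx).2, (hg y hy).2] at this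
    exact this hxy

theorem dg_erase {V : Type*} (G : SimpleGraph V) {S : Finset V} {u : V} (hu : u ∈ S) (x : V) :
    dg G S x = dg G (S.erase u) x + if G.Adj x u then 1 else 0 := by
  unfold dg
  rw [Finset.filter_erase]
  split_ifs with h
  · rw [Finset.card_erase_add_one]; simp [hu, h]
  · rw [Finset.erase_eq_of_notMem]; · rfl
    simp [h]

theorem dg_erase_self {V : Type*} (G : SimpleGraph V) {S : Finset V} {u : V} (hu : u ∈ S) :
    dg G (S.erase u) u = dg G S u := by
  have := dg_erase G hu u
  simp at this; omega

theorem dg_sum {V : Type*} (G : SimpleGraph V) (S : Finset V) (u : V) :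
    dg G S u = ∑ x ∈ S, if G.Adj x u then 1 else 0 := by
  unfold dg
  rw [Finset.card_filter]
  simp only [G.adj_comm]

theorem DS_erase {V : Type*} (G : SimpleGraph V) {S : Finset V} {u : V} (hu : u ∈ S) :
    DS G S = DS G (S.erase u) + 2 * dg G S u := by
  unfold DS
  rw [← Finset.add_sum_erase S _ hu]
  have : ∑ x ∈ S.erase u, dg G S x
      = ∑ x ∈ S.erase u, dg G (S.erase u) x + dg G S u := by
    rw [← dg_erase_self G hu, dg_sum G (S.erase u) u, ← Finset.sum_add_distrib]
    exact Finset.sum_congr rfl fun x _ => dg_erase G hu x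
  omega

theorem dg_zero {V : Type*} {G : SimpleGraph V} {S : Finset V} {u : V} :
    dg G S u = 0 ↔ ∀ y ∈ S, ¬ G.Adj u y := by
  unfold dg
  rw [Finset.card_eq_zero, Finset.filter_eq_empty_iff]

theorem dg_pos {V : Type*} {G : SimpleGraph V} {S : Finset V} {u y : V} (hy : y ∈ S)
    (h : G.Adj u y) : 1 ≤ dg G S u := by
  by_contra hh
  exact dg_zero.1 (by omega : dg G S u = 0) y hy h

/-- `x` is a leaf in `S` with neighbour `y`. -/
def Lf {V : Type*} (G : SimpleGraph V) (S : Finset V) (x y : V) : Prop :=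
  x ∈ S ∧ y ∈ S ∧ G.Adj x y ∧ ∀ z ∈ S, G.Adj x z → z = y

theorem lf_of_dg {V : Type*} {G : SimpleGraph V} {S : Finset V} {x : V} (hx : x ∈ S)
    (h : dg G S x = 1) : ∃ y, Lf G S x y := by
  obtain ⟨y, hy⟩ := Finset.card_eq_one.1 h
  have hm : ∀ z, (z ∈ S ∧ G.Adj x z) ↔ z = y := fun z => by
    rw [← Finset.mem_filter, hy, Finset.mem_singleton]
  exact ⟨y, hx, ((hm y).2 rfl).1, ((hm y).2 rfl).2, fun z hz ha => (hm z).1 ⟨hz, ha⟩⟩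

theorem Lf.dg {V : Type*} {G : SimpleGraph V} {S : Finset V} {x y : V} (h : Lf G S x y) :
    dg G S x = 1 := by
  obtain ⟨_, hy, ha, hz⟩ := h
  refine Finset.card_eq_one.2 ⟨y, ?_⟩
  ext z
  simp only [Finset.mem_filter, Finset.mem_singleton]
  exact ⟨fun h => hz z h.1 h.2, fun h => h ▸ ⟨hy, ha⟩⟩

theorem exists_leaf {V : Type*} {G : SimpleGraph V} {S : Finset V}
    (h1 : ∀ x ∈ S, 1 ≤ dg G S x) (hD : DS G S + 3 ≤ 2 * S.card) :
    ∃ x y, Lf G S x y := by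
  by_contra hcon
  push Not at hcon
  have : ∀ x ∈ S, 2 ≤ SS.dg G S x := by
    intro x hx
    by_contra h
    obtain ⟨y, hy⟩ := lf_of_dg (G := G) hx (by have := h1 x hx; omega)
    exact hcon x y hy
  have := Finset.card_nsmul_le_sum S _ 2 this
  simp only [smul_eq_mul] at this
  change (∑ x ∈ S, SS.dg G S x) + 3 ≤ _ at hD
  change _ ≤ ∑ x ∈ S, SS.dg G S x at this
  omega

theorem exists_leaves {V : Type*} {G : SimpleGraph V} {S : Finset V}
    (h1 : ∀ x ∈ S, 1 ≤ dg G S x) (hD : DS G S + 3 ≤ 2 * S.card) :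
    ∃ x y x' y', Lf G S x y ∧ Lf G S x' y' ∧ y ≠ y' := by
  obtain ⟨x, y, hxy⟩ := exists_leaf h1 hD
  by_contra hcon
  push Not at hcon
  have hy := hxy.2.1
  have : ∀ z ∈ S.erase y, 2 ≤ SS.dg G S z + if G.Adj z y then 1 else 0 := by
    intro z hz
    have hz' := (Finset.mem_erase.1 hz).2
    by_contra h
    obtain ⟨w, hw⟩ := lf_of_dg (G := G) hz' (by have := h1 z hz'; omega)
    have := hcon x y z w hxy hw
    subst this
    rw [hw.dg, if_pos hw.2.2.1] at h
    omega
  have := Finset.card_nsmul_le_sum _ _ 2 this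
  rw [Finset.sum_add_distrib, ← dg_sum, dg_erase_self G hy, Finset.card_erase_of_mem hy] at this
  simp only [smul_eq_mul] at this
  unfold DS at hD
  rw [← Finset.add_sum_erase S _ hy] at hD
  omega

theorem pk_empty {V : Type*} (G H : SimpleGraph V) (n : ℕ) : ∀ S T : Finset V, S.card = n →
    T.card = n → (∀ x ∈ T, dg H T x = 0) → ∃ f, Pk G H S T f := by
  induction n with
  | zero =>
    intro S T hS hT _
    rw [Finset.card_eq_zero] at hS
    subst hS
    exact ⟨id, by simp [Pk]⟩
  | succ n ih =>
    intro S T hS hT h0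
    obtain ⟨u, hu⟩ : S.Nonempty := Finset.card_pos.1 (by omega)
    obtain ⟨v, hv⟩ : T.Nonempty := Finset.card_pos.1 (by omega)
    obtain ⟨f, hf⟩ := ih (S.erase u) (T.erase v) (by rw [Finset.card_erase_of_mem hu]; omega)
      (by rw [Finset.card_erase_of_mem hv]; omega) (by
        intro x hx
        have := h0 x (Finset.mem_of_mem_erase hx)
        rw [dg_erase H hv x] at this
        omega)
    refine ⟨_, hf.ext hv ?_⟩
    intro y hy hyu _ hH
    exact dg_zero.1 (h0 v hv) _ (Finset.mem_of_mem_erase (hf.1 y (by simp [hy, hyu]))) hH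

/-- isolated `u` to leaf `a`, arbitrary `v` to its neighbour `b`. -/
theorem ext2 {V : Type*} {G H : SimpleGraph V} {S T : Finset V} {u v a b : V}
    (hu : ∀ y ∈ S, ¬ G.Adj u y) (hv : v ∈ S) (huv : u ≠ v)
    (hab : Lf H T a b) (hba : ∀ z ∈ T, H.Adj b z → z = a)
    (h : ∃ f, Pk G H ((S.erase u).erase v) ((T.erase a).erase b) f) : ∃ f, Pk G H S T f := by
  obtain ⟨f, hf⟩ := h
  have hab' := hab.2.2.1.ne
  have hf2 := hf.ext (u := v) (v := b) (by simp [hab.2.1, hab'.symm]) (by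
    intro y hy hyv _ hH
    have := hf.1 y (by simp at hy ⊢; tauto)
    simp only [Finset.mem_erase] at this
    exact this.2.1 (hba _ this.2.2 hH))
  exact ⟨_, hf2.ext hab.1 (fun y hy _ hG => absurd hG (hu y hy))⟩

theorem edge_or {V : Type*} {H : SimpleGraph V} {T : Finset V} (hT : ∀ x ∈ T, dg H T x ≤ 1) :
    (∀ x ∈ T, dg H T x = 0) ∨ ∃ a b, Lf H T a b ∧ Lf H T b a := by
  by_cases h : ∀ x ∈ T, dg H T x = 0
  · exact Or.inl h
  right
  push Not at h
  obtain ⟨a, ha, h0⟩ := h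
  obtain ⟨b, hb⟩ := lf_of_dg (G := H) ha (by have := hT a ha; omega)
  have hba : 1 ≤ dg H T b := dg_pos ha hb.2.2.1.symm
  obtain ⟨c, hc⟩ := lf_of_dg (G := H) hb.2.1 (by have := hT b hb.2.1; omega)
  have := hc.2.2.2 a ha hb.2.2.1.symm
  subst this
  exact ⟨a, b, hb, hc⟩

theorem dg_erase_le {V : Type*} (G : SimpleGraph V) {S : Finset V} {u : V} (hu : u ∈ S) (x : V) :
    dg G (S.erase u) x ≤ dg G S x := by
  rw [dg_erase G hu x]; omega

theorem pk_match {V : Type*} (G H : SimpleGraph V) (n : ℕ) : ∀ S T : Finset V, S.card = n →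
    T.card = n → (∀ x ∈ S, dg G S x ≤ 1) → (∀ x ∈ T, dg H T x ≤ 1) →
    (∃ u ∈ S, dg G S u = 0) → ∃ f, Pk G H S T f := by
  induction n using Nat.strong_induction_on with
  | _ n ih =>
  rintro S T hS hT hG hH ⟨u, hu, hu0⟩
  obtain h0 | ⟨a, b, hab, hba⟩ := edge_or hH
  · exact pk_empty G H n S T hS hT h0
  obtain h0 | ⟨v, w, hvw, hwv⟩ := edge_or hG
  · exact Pk.symm (by omega) (pk_empty H G n T S hT hS h0)
  have hvS := hvw.1
  have huv : u ≠ v := by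
    rintro rfl; have := hvw.dg; omega
  have huw : u ≠ w := by
    rintro rfl; have := hwv.dg; omega
  have hne := hab.2.2.1.ne
  have hvu : v ∈ S.erase u := by simp [hvS, huv.symm]
  have hbT : b ∈ T.erase a := by simp [hab.2.1, hne.symm]
  have c1 := Finset.card_erase_add_one hu
  have c2 := Finset.card_erase_add_one hvu
  have c3 := Finset.card_erase_add_one hab.1
  have c4 := Finset.card_erase_add_one hbT
  refine ext2 (dg_zero.1 hu0) hvS huv hab hba.2.2.2 (ih (n - 2) (by omega) _ _ (by omega) (by omega)
    ?_ ?_ ⟨w, ?_, ?_⟩)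
  · intro x hx
    have := hG x (Finset.mem_of_mem_erase (Finset.mem_of_mem_erase hx))
    exact ((dg_erase_le G hvu x).trans (dg_erase_le G hu x)).trans this
  · intro x hx
    have := hH x (Finset.mem_of_mem_erase (Finset.mem_of_mem_erase hx))
    exact ((dg_erase_le H hbT x).trans (dg_erase_le H hab.1 x)).trans this
  · simp [hwv.1, huw.symm, hvw.2.2.1.ne.symm]
  · rw [dg_zero]
    intro y hy hwy
    simp only [Finset.mem_erase] at hy
    exact hy.1 (hwv.2.2.2 y hy.2.2 hwy)

def IHyp {V : Type*} (n : ℕ) : Prop := ∀ m < n, ∀ (G H : SimpleGraph V) (S T : Finset V),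
  S.card = m → T.card = m → DS G S + DS H T + 3 ≤ 3 * m → ∃ f, Pk G H S T f

theorem case_iso {V : Type*} {G H : SimpleGraph V} {n : ℕ} (ih : IHyp (V := V) n) {S T : Finset V}
    (hS : S.card = n) (hT : T.card = n) (hD : DS G S + DS H T + 3 ≤ 3 * n)
    {u : V} (hu : u ∈ S) (hu0 : dg G S u = 0) : ∃ f, Pk G H S T f := by
  have c1 := Finset.card_erase_add_one hu
  have d1 := DS_erase G hu
  by_cases hH : ∀ x ∈ T, dg H T x ≤ 1
  · obtain h0 | ⟨a, b, hab, hba⟩ := edge_or hH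
    · exact pk_empty G H n S T hS hT h0
    by_cases hG : ∀ x ∈ S, dg G S x ≤ 1
    · exact pk_match G H n S T hS hT hG hH ⟨u, hu, hu0⟩
    push Not at hG
    obtain ⟨v, hv, hv2⟩ := hG
    have huv : u ≠ v := by rintro rfl; omega
    have hne := hab.2.2.1.ne
    have hvu : v ∈ S.erase u := by simp [hv, huv.symm]
    have hbT : b ∈ T.erase a := by simp [hab.2.1, hne.symm]
    have c2 := Finset.card_erase_add_one hvu
    have c3 := Finset.card_erase_add_one hab.1
    have c4 := Finset.card_erase_add_one hbT
    have d2 := DS_erase G hvu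
    have d3 := DS_erase H hab.1
    have d4 := DS_erase H hbT
    have e1 := hab.dg
    have e2 := dg_erase G hu v
    rw [if_neg (fun h => dg_zero.1 hu0 v hv h.symm)] at e2
    exact ext2 (dg_zero.1 hu0) hv huv hab hba.2.2.2
      (ih (n - 2) (by omega) _ _ _ _ (by omega) (by omega) (by omega))
  · push Not at hH
    obtain ⟨v, hv, hv2⟩ := hH
    have c3 := Finset.card_erase_add_one hv
    have d3 := DS_erase H hv
    obtain ⟨f, hf⟩ := ih (n - 1) (by omega) G H (S.erase u) (T.erase v) (by omega) (by omega)
      (by omega)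
    exact ⟨_, hf.ext hv (fun y hy _ hG => absurd hG (dg_zero.1 hu0 y hy))⟩

theorem DS_ge {V : Type*} {G : SimpleGraph V} {S : Finset V} (h1 : ∀ x ∈ S, 1 ≤ dg G S x) :
    S.card ≤ DS G S := by
  have := Finset.card_nsmul_le_sum S _ 1 h1
  simpa [DS] using this

theorem case_K2 {V : Type*} {G H : SimpleGraph V} {n : ℕ} (ih : IHyp (V := V) n) {S T : Finset V}
    (hS : S.card = n) (hT : T.card = n) (hD : DS G S + DS H T + 3 ≤ 3 * n)
    (hG : ∀ x ∈ S, 1 ≤ dg G S x) (hH : ∀ x ∈ T, 1 ≤ dg H T x)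
    {x y : V} (hxy : Lf G S x y) (hyx : Lf G S y x) : ∃ f, Pk G H S T f := by
  have g1 := DS_ge hG
  have g2 := DS_ge hH
  obtain ⟨a, b, hab⟩ := exists_leaf hH (by omega)
  have hne := hab.2.2.1.ne
  have hxyne := hxy.2.2.1.ne
  obtain ⟨c, hc⟩ : ((T.erase a).erase b).Nonempty := by
    rw [← Finset.card_pos, Finset.card_erase_of_mem (by simp [hab.2.1, hne.symm]),
      Finset.card_erase_of_mem hab.1]
    omega
  simp only [Finset.mem_erase] at hc
  obtain ⟨hcb, hca, hcT⟩ := hc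
  have hac : ¬ H.Adj a c := fun h => hcb (hab.2.2.2 c hcT h)
  have hyS : y ∈ S.erase x := by simp [hxy.2.1, hxyne.symm]
  have hcT' : a ∈ T.erase c := by simp [hab.1, hca.symm]
  have c1 := Finset.card_erase_add_one hxy.1
  have c2 := Finset.card_erase_add_one hyS
  have c3 := Finset.card_erase_add_one hcT
  have c4 := Finset.card_erase_add_one hcT'
  have d1 := DS_erase G hxy.1
  have d2 := DS_erase G hyS
  have d3 := DS_erase H hcT
  have d4 := DS_erase H hcT'
  have e1 := hxy.dg
  have e2 := hab.dg
  have e3 := hH c hcT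
  have e4 := dg_erase H hcT a
  rw [if_neg hac] at e4
  obtain ⟨f, hf⟩ := ih (n - 2) (by omega) G H ((S.erase x).erase y) ((T.erase c).erase a)
    (by omega) (by omega) (by omega)
  have hf2 := hf.ext (u := y) (v := a) hcT' (by
    intro z hz hzy hyz _
    simp only [Finset.mem_erase] at hz
    exact hz.1 (hyx.2.2.2 z hz.2 hyz))
  refine ⟨_, hf2.ext hcT ?_⟩
  intro z hz _ hxz hH'
  have := hxy.2.2.2 z hz hxz
  subst this
  rw [Function.update_self] at hH'
  exact hac hH'.symm

theorem drop4 {V : Type*} {G : SimpleGraph V} {S : Finset V} {x y x' y' : V}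
    (hx : Lf G S x y) (hx' : Lf G S x' y') (hy : y ≠ y')
    (hK : ∀ x y, Lf G S x y → ¬ Lf G S y x) (hG : ∀ x ∈ S, 1 ≤ dg G S x) :
    x ≠ x' ∧ x ≠ y' ∧ y ≠ x' ∧
    ((((S.erase x').erase x).erase y').erase y).card + 4 = S.card ∧
    DS G ((((S.erase x').erase x).erase y').erase y) + 6 ≤ DS G S := by
  have key : ∀ x y, Lf G S x y → 2 ≤ dg G S y := by
    intro x y h
    by_contra hlt
    obtain ⟨z, hz⟩ := lf_of_dg (G := G) h.2.1 (by have := hG y h.2.1; omega)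
    have := hz.2.2.2 x h.1 h.2.2.1.symm
    subst this
    exact hK _ _ h hz
  have k1 := key x y hx
  have k2 := key x' y' hx'
  have l1 := hx.dg
  have l2 := hx'.dg
  have n1 : x ≠ x' := by
    rintro rfl
    exact hy (hx'.2.2.2 y hx.2.1 hx.2.2.1)
  have n2 : x ≠ y' := by rintro rfl; omega
  have n3 : y ≠ x' := by rintro rfl; omega
  have n4 := hx.2.2.1.ne
  have n5 := hx'.2.2.1.ne
  have m1 := hx'.1
  have m2 : x ∈ S.erase x' := by simp [n1, hx.1]
  have m3 : y' ∈ (S.erase x').erase x := by simp [n2.symm, n5.symm, hx'.2.1]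
  have m4 : y ∈ ((S.erase x').erase x).erase y' := by simp [hy, n3, n4.symm, hx.2.1]
  refine ⟨n1, n2, n3, ?_, ?_⟩
  · have c1 := Finset.card_erase_add_one m1
    have c2 := Finset.card_erase_add_one m2
    have c3 := Finset.card_erase_add_one m3
    have c4 := Finset.card_erase_add_one m4
    omega
  · have d1 := DS_erase G m1
    have d2 := DS_erase G m2
    have d3 := DS_erase G m3
    have d4 := DS_erase G m4
    have e1 := dg_erase G m1 x
    rw [if_neg (fun h => n3 (hx.2.2.2 x' hx'.1 h).symm)] at e1
    have e2 := dg_erase G m1 y'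
    have e3 := dg_erase G m2 y'
    rw [if_neg (fun h => hy (hx.2.2.2 y' hx'.2.1 h.symm).symm)] at e3
    rw [if_pos hx'.2.2.1.symm] at e2
    omega

theorem case_main {V : Type*} {G H : SimpleGraph V} {n : ℕ} (ih : IHyp (V := V) n) {S T : Finset V}
    (hS : S.card = n) (hT : T.card = n) (hD : DS G S + DS H T + 3 ≤ 3 * n)
    (hG : ∀ x ∈ S, 1 ≤ dg G S x) (hH : ∀ x ∈ T, 1 ≤ dg H T x)
    (hKG : ∀ x y, Lf G S x y → ¬ Lf G S y x) (hKH : ∀ x y, Lf H T x y → ¬ Lf H T y x) :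
    ∃ f, Pk G H S T f := by
  have g1 := DS_ge hG
  have g2 := DS_ge hH
  obtain ⟨x, y, x', y', hx, hx', hy⟩ := exists_leaves hG (by omega)
  obtain ⟨a, b, a', b', ha, ha', hb⟩ := exists_leaves hH (by omega)
  obtain ⟨p1, p2, p3, p4, p5⟩ := drop4 hx hx' hy hKG hG
  obtain ⟨q1, q2, q3, q4, q5⟩ := drop4 ha ha' hb hKH hH
  have hTe : (((T.erase a').erase a).erase b').erase b = (((T.erase b').erase b).erase a).erase a' := by
    ext z; simp only [Finset.mem_erase]; tauto
  rw [hTe] at q4 q5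
  obtain ⟨f, hf⟩ := ih (n - 4) (by omega) G H _ _ (by omega) (by omega)
    (by omega : DS G ((((S.erase x').erase x).erase y').erase y) +
      DS H ((((T.erase b').erase b).erase a).erase a') + 3 ≤ 3 * (n - 4))
  have r1 := ha.2.2.1.ne
  have r2 := ha'.2.2.1.ne
  have s1 := hx.2.2.1.ne
  have s2 := hx'.2.2.1.ne
  have hf1 := hf.ext (u := y) (v := a') (by simp [q1.symm, q3.symm, r2, ha'.1]) (by
    intro z hz hzy _ hH'
    have := hf.1 z (by simp only [Finset.mem_erase] at hz ⊢; tauto)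
    simp only [Finset.mem_erase] at this
    exact this.2.2.2.1 (ha'.2.2.2 _ (by tauto) hH'))
  have hf2 := hf1.ext (u := y') (v := a) (by simp [r1, q2, ha.1]) (by
    intro z hz hzy _ hH'
    have := hf1.1 z (by simp only [Finset.mem_erase] at hz ⊢; tauto)
    simp only [Finset.mem_erase] at this
    exact this.2.1 (ha.2.2.2 _ (by tauto) hH'))
  have hf3 := hf2.ext (u := x) (v := b) (by simp [hb, ha.2.1]) (by
    intro z hz hzx hxz hH'
    simp only [Finset.mem_erase] at hz
    have := hx.2.2.2 z hz.2 hxz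
    subst this
    rw [Function.update_of_ne hy, Function.update_self] at hH'
    exact hb (ha'.2.2.2 b ha.2.1 hH'.symm))
  refine ⟨_, hf3.ext ha'.2.1 ?_⟩
  intro z hz hzx hxz hH'
  have := hx'.2.2.2 z hz hxz
  subst this
  rw [Function.update_of_ne p2.symm, Function.update_self] at hH'
  exact hb (ha.2.2.2 b' ha'.2.1 hH'.symm).symm

theorem pack_main {V : Type*} (n : ℕ) : ∀ (G H : SimpleGraph V) (S T : Finset V),
    S.card = n → T.card = n → DS G S + DS H T + 3 ≤ 3 * n → ∃ f, Pk G H S T f := by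
  induction n using Nat.strong_induction_on with
  | _ n ih =>
  intro G H S T hS hT hD
  have ih' : IHyp (V := V) n := ih
  by_cases hG : ∀ x ∈ S, 1 ≤ dg G S x
  swap
  · push Not at hG
    obtain ⟨u, hu, h0⟩ := hG
    exact case_iso ih' hS hT hD hu (by omega)
  by_cases hH : ∀ x ∈ T, 1 ≤ dg H T x
  swap
  · push Not at hH
    obtain ⟨u, hu, h0⟩ := hH
    exact Pk.symm (by omega) (case_iso ih' hT hS (by omega) hu (by omega))
  by_cases hKG : ∀ x y, Lf G S x y → ¬ Lf G S y x
  swap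
  · push Not at hKG
    obtain ⟨x, y, h1, h2⟩ := hKG
    exact case_K2 ih' hS hT hD hG hH h1 h2
  by_cases hKH : ∀ x y, Lf H T x y → ¬ Lf H T y x
  swap
  · push Not at hKH
    obtain ⟨x, y, h1, h2⟩ := hKH
    exact Pk.symm (by omega) (case_K2 ih' hT hS (by omega) hH hG h1 h2)
  exact case_main ih' hS hT hD hG hH hKG hKH

def gr {n : ℕ} (E : Finset (Finset (Fin n))) : SimpleGraph (Fin n) where
  Adj x y := x ≠ y ∧ ({x, y} : Finset (Fin n)) ∈ E
  symm := ⟨fun x y h => ⟨h.1.symm, by rw [Finset.pair_comm]; exact h.2⟩⟩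
  loopless := ⟨fun x h => h.1 rfl⟩

theorem DS_gr {n : ℕ} (E : Finset (Finset (Fin n))) (hE : Uniform 2 E) :
    DS (gr E) Finset.univ ≤ 2 * E.card := by
  have h1 : ∀ x : Fin n, dg (gr E) Finset.univ x ≤ (E.filter fun e => x ∈ e).card := by
    intro x
    apply Finset.card_le_card_of_injOn (fun y => ({x, y} : Finset (Fin n)))
    · intro y hy
      have hy' : x ≠ y ∧ ({x, y} : Finset (Fin n)) ∈ E := (Finset.mem_filter.1 hy).2
      simp [hy'.2]
    · intro y hy z hz hyz
      have hy' : x ≠ y ∧ ({x, y} : Finset (Fin n)) ∈ E := (Finset.mem_filter.1 hy).2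
      have : y ∈ ({x, z} : Finset (Fin n)) := by
        have h : ({x, y} : Finset (Fin n)) = {x, z} := hyz
        rw [← h]; simp
      simp only [Finset.mem_insert, Finset.mem_singleton] at this
      rcases this with h | h
      · exact absurd h.symm hy'.1
      · exact h
  have h2 : ∑ x : Fin n, (E.filter fun e => x ∈ e).card = ∑ e ∈ E, e.card := by
    simp only [Finset.card_filter]
    rw [Finset.sum_comm]
    refine Finset.sum_congr rfl fun e _ => ?_
    simp
  calc DS (gr E) Finset.univ ≤ ∑ x : Fin n, (E.filter fun e => x ∈ e).card :=
        Finset.sum_le_sum fun x _ => h1 x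
    _ = ∑ e ∈ E, e.card := h2
    _ = 2 * E.card := by rw [Finset.sum_congr rfl hE]; simp [mul_comm]

theorem packs_of {n : ℕ} (E₁ E₂ : Finset (Finset (Fin n))) (h1 : Uniform 2 E₁) (h2 : Uniform 2 E₂)
    (h : 2 * (E₁.card + E₂.card) + 3 ≤ 3 * n) : Packs E₁ E₂ := by
  obtain ⟨f, -, hinj, hf⟩ := pack_main n (gr E₁) (gr E₂) Finset.univ Finset.univ (by simp) (by simp)
    (by have := DS_gr E₁ h1; have := DS_gr E₂ h2; omega)
  have hi : Function.Injective f := fun x y => hinj x (by simp) y (by simp)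
  refine ⟨Equiv.ofBijective f (Finite.injective_iff_bijective.1 hi), ?_⟩
  intro e he hm
  obtain ⟨x, y, hxy, rfl⟩ := Finset.card_eq_two.1 (h1 e he)
  refine hf x (by simp) y (by simp) ⟨hxy, he⟩ ⟨fun h => hxy (hi h), ?_⟩
  have : Finset.image f {x, y} = {f x, f y} := by
    rw [Finset.image_insert, Finset.image_singleton]
  rw [← this]
  exact hm

theorem star_ex (n : ℕ) (hn : 2 ≤ n) : ∃ E₁ E₂ : Finset (Finset (Fin n)),
    Uniform 2 E₁ ∧ Uniform 2 E₂ ∧ ¬ Packs E₁ E₂ ∧ E₁.card + E₂.card + 1 = (3 * n + 1) / 2 := by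
  let z : Fin n := ⟨0, by omega⟩
  let p : ℕ → Fin n := fun i => ⟨min (2 * i) (n - 2), by omega⟩
  let q : ℕ → Fin n := fun i => ⟨min (2 * i) (n - 2) + 1, by omega⟩
  have hpq : ∀ i, p i ≠ q i := fun i h => by
    have := congrArg Fin.val h
    simp [p, q] at this
  let E₁ : Finset (Finset (Fin n)) := (Finset.univ.erase z).image fun i => {z, i}
  let E₂ : Finset (Finset (Fin n)) := (Finset.range ((n + 1) / 2)).image fun i => {p i, q i}
  have c1 : E₁.card = n - 1 := by
    rw [Finset.card_image_of_injOn, Finset.card_erase_of_mem (by simp)]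
    · simp
    · intro a ha b hb hab
      have h : ({z, a} : Finset (Fin n)) = {z, b} := hab
      have : a ∈ ({z, b} : Finset (Fin n)) := by rw [← h]; simp
      simp only [Finset.mem_insert, Finset.mem_singleton] at this
      rcases this with h | h
      · simp [h] at ha
      · exact h
  have c2 : E₂.card = (n + 1) / 2 := by
    rw [Finset.card_image_of_injOn]
    · simp
    · intro a ha b hb hab
      have h : ({p a, q a} : Finset (Fin n)) = {p b, q b} := hab
      have h1 : p a ∈ ({p b, q b} : Finset (Fin n)) := by rw [← h]; simp
      have h2 : q a ∈ ({p b, q b} : Finset (Fin n)) := by rw [← h]; simp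
      simp only [Finset.mem_insert, Finset.mem_singleton, p, q, Fin.ext_iff] at h1 h2
      simp only [Finset.coe_range, Set.mem_Iio] at ha hb
      omega
  refine ⟨E₁, E₂, ?_, ?_, ?_, ?_⟩
  · intro e he
    obtain ⟨i, hi, rfl⟩ := Finset.mem_image.1 he
    exact Finset.card_pair (Finset.ne_of_mem_erase hi).symm
  · intro e he
    obtain ⟨i, hi, rfl⟩ := Finset.mem_image.1 he
    exact Finset.card_pair (hpq i)
  · rintro ⟨f, hf⟩
    obtain ⟨w, hw, hm⟩ : ∃ w, w ≠ f z ∧ ({f z, w} : Finset (Fin n)) ∈ E₂ := by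
      have hlt := (f z).isLt
      have hr : (f z).val / 2 ∈ Finset.range ((n + 1) / 2) := by
        rw [Finset.mem_range]; omega
      have hmem : ({p ((f z).val / 2), q ((f z).val / 2)} : Finset (Fin n)) ∈ E₂ :=
        Finset.mem_image.2 ⟨_, hr, rfl⟩
      have hor : f z = p ((f z).val / 2) ∨ f z = q ((f z).val / 2) := by
        simp only [p, q, Fin.ext_iff]
        omega
      rcases hor with h | h
      · refine ⟨q ((f z).val / 2), fun h' => hpq _ (h.symm.trans h'.symm), ?_⟩
        have e : ({f z, q ((f z).val / 2)} : Finset (Fin n)) = {p ((f z).val / 2), q ((f z).val / 2)} :=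
          congrArg (fun t => ({t, q ((f z).val / 2)} : Finset (Fin n))) h
        rw [e]; exact hmem
      · refine ⟨p ((f z).val / 2), fun h' => hpq _ (h'.trans h), ?_⟩
        have e : ({f z, p ((f z).val / 2)} : Finset (Fin n)) = {q ((f z).val / 2), p ((f z).val / 2)} :=
          congrArg (fun t => ({t, p ((f z).val / 2)} : Finset (Fin n))) h
        rw [e, Finset.pair_comm]; exact hmem
    have hne : f.symm w ≠ z := fun h => hw (by rw [← h]; simp)
    refine hf {z, f.symm w} (Finset.mem_image.2 ⟨f.symm w, by simp [hne], rfl⟩) ?_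
    rw [Finset.image_insert, Finset.image_singleton, Equiv.apply_symm_apply]
    exact hm
  · rw [c1, c2]; omega

theorem ceil_eq (n : ℕ) : ⌈(3 * (n : ℚ)) / 2⌉ = (((3 * n + 1) / 2 : ℕ) : ℤ) := by
  rw [Int.ceil_eq_iff]
  obtain ⟨k, rfl | rfl⟩ := Nat.even_or_odd' n
  · rw [show (3 * (2 * k) + 1) / 2 = 3 * k by omega]
    push_cast
    constructor <;> linarith
  · rw [show (3 * (2 * k + 1) + 1) / 2 = 3 * k + 2 by omega]
    push_cast
    constructor <;> linarith

end SS

/-- for `n ≥ 2`, `m(n,2) = ⌈3n/2⌉ − 1`: any two graphs on `n` vertices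
with `|E(G₁)| + |E(G₂)| ≤ ⌈3n/2⌉ − 2` pack, and there exist two non-packing graphs on
`n` vertices with `|E(G₁)| + |E(G₂)| = ⌈3n/2⌉ − 1`. -/
theorem stmt_12 (n : ℕ) (hn : 2 ≤ n) :
    (∀ E₁ E₂ : Finset (Finset (Fin n)), Uniform 2 E₁ → Uniform 2 E₂ →
      (E₁.card + E₂.card : ℤ) ≤ ⌈(3 * (n : ℚ)) / 2⌉ - 2 → Packs E₁ E₂) ∧
    (∃ E₁ E₂ : Finset (Finset (Fin n)), Uniform 2 E₁ ∧ Uniform 2 E₂ ∧ ¬ Packs E₁ E₂ ∧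
      (E₁.card + E₂.card : ℤ) = ⌈(3 * (n : ℚ)) / 2⌉ - 1) ∧
    (mMin n 2 : ℤ) = ⌈(3 * (n : ℚ)) / 2⌉ - 1 := by
  rw [SS.ceil_eq]
  obtain ⟨F₁, F₂, u1, u2, hnp, hc⟩ := SS.star_ex n hn
  refine ⟨?_, ⟨F₁, F₂, u1, u2, hnp, by omega⟩, ?_⟩
  · intro E₁ E₂ h1 h2 h
    exact SS.packs_of E₁ E₂ h1 h2 (by omega)
  · have hle : mMin n 2 ≤ F₁.card + F₂.card := Nat.sInf_le ⟨F₁, F₂, u1, u2, hnp, rfl⟩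
    have hge : F₁.card + F₂.card ≤ mMin n 2 := by
      refine le_csInf ⟨F₁.card + F₂.card, F₁, F₂, u1, u2, hnp, rfl⟩ ?_
      rintro m ⟨E₁, E₂, h1, h2, h3, rfl⟩
      by_contra hlt
      exact h3 (SS.packs_of E₁ E₂ h1 h2 (by omega))
    omega
end
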